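/- Let d ≥ 2 and 1 ≤ n < d. For Lebesgue-almost-every choice of the coefficient tuples defining n convex PL functions f_1, …, f_n on ℝ^d (each a maximum of r_j ≥ 2 affine functions), the one-point compactification of X = X_1 ∩ ⋯ ∩ X_n, where X_j is the bend locus of f_j, is (d−n−1)-connected. -/

import Mathlib

open scoped RealInnerProductSpace
open MeasureTheory

/-- The convex PL function `x ↦ max_{1 ≤ i ≤ r} (⟪x, b i⟫ + a i)` (an `iSup` over the
nonempty finite index type `Fin r`, hence a maximum). -/
noncomputable def plMax {d r : ℕ} (b : Fin r → EuclideanSpace ℝ (Fin d)) (a : Fin r → ℝ) :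
    EuclideanSpace ℝ (Fin d) → ℝ :=
  fun x => ⨆ i : Fin r, (⟪x, b i⟫ + a i)

/-- The bend locus of a convex PL function: the set of points where it is not differentiable. -/
def bendLocus {d r : ℕ} (b : Fin r → EuclideanSpace ℝ (Fin d)) (a : Fin r → ℝ) :
    Set (EuclideanSpace ℝ (Fin d)) :=
  {x | ¬ DifferentiableAt ℝ (plMax b a) x}

/-- A topological space `Y` is `m`-connected (`m ≥ 0`): it is nonempty, path-connected,
and all homotopy groups `π_k(Y, y)` for `1 ≤ k ≤ m` and all basepoints `y` are trivial. -/
def SpaceMConnected (m : ℕ) (Y : Type*) [TopologicalSpace Y] : Prop :=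
  Nonempty Y ∧ PathConnectedSpace Y ∧
    ∀ k : ℕ, 1 ≤ k → k ≤ m → ∀ y : Y, Subsingleton (HomotopyGroup (Fin k) Y y)

open Set Metric Topology

section Grid

/-- Every continuous map from the boundary of the `j`-dimensional cube into `A` extends to a
continuous map from the cube into `B`. -/
def SphereExtends {Y : Type*} [TopologicalSpace Y] (j : ℕ) (A B : Set Y) : Prop :=
  ∀ f : (Fin j → ℝ) → Y, ContinuousOn f (sphere 0 1) → MapsTo f (sphere 0 1) A →
    ∃ g : (Fin j → ℝ) → Y, ContinuousOn g (closedBall 0 1) ∧ MapsTo g (closedBall 0 1) B ∧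
      EqOn g f (sphere 0 1)

theorem SphereExtends.mono {Y : Type*} [TopologicalSpace Y] {j : ℕ} {A A' B B' : Set Y}
    (h : SphereExtends j A B) (hA : A' ⊆ A) (hB : B ⊆ B') : SphereExtends j A' B' := by
  intro f hf hfA
  obtain ⟨g, hg, hgB, hgf⟩ := h f hf (hfA.mono_right hA)
  exact ⟨g, hg, hgB.mono_right hB, hgf⟩

variable {ι : Type*}

/-- The closed cell with centre `s` of the cubical grid with vertex set `(2ℤ)^ι`: even coordinates
of `s` are fixed, odd ones range over an interval of radius one. -/
def gridCell (s : ι → ℤ) : Set (ι → ℝ) := {t | ∀ i, |t i - s i| ≤ ((s i % 2 : ℤ) : ℝ)}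

/-- The relative boundary of a grid cell. -/
def gridCellBoundary (s : ι → ℤ) : Set (ι → ℝ) :=
  {t | t ∈ gridCell s ∧ ∃ i, s i % 2 = 1 ∧ |t i - s i| = 1}

/-- The dimension of a grid cell. -/
def gridDim [Fintype ι] (s : ι → ℤ) : ℕ := (Finset.univ.filter fun i => s i % 2 = 1).card

theorem center_mem_gridCell (s : ι → ℤ) : (fun i => (s i : ℝ)) ∈ gridCell s := by
  intro i
  rcases Int.emod_two_eq_zero_or_one (s i) with h | h <;> simp [h]

theorem isClosed_gridCell (s : ι → ℤ) : IsClosed (gridCell s) := by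
  simp only [gridCell, ofPred_forall]
  exact isClosed_iInter fun i => isClosed_le (by fun_prop) continuous_const

/-- If a cell `s'` meets the relative interior of a cell `s`, then `s` is a face of `s'`. -/
theorem gridCell_face_of_mem [Fintype ι] {s s' : ι → ℤ} {t : ι → ℝ} (hs' : t ∈ gridCell s')
    (hs : t ∈ gridCell s) (hb : t ∉ gridCellBoundary s) :
    gridCell s ⊆ gridCell s' ∧ (s = s' ∨ gridDim s < gridDim s') := by
  have key : ∀ i, s i = s' i ∨
      (s i % 2 = 0 ∧ s' i % 2 = 1 ∧ (s' i = s i + 1 ∨ s' i = s i - 1)) := by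
    intro i
    have h1 := hs i
    have h2 := hs' i
    rcases Int.emod_two_eq_zero_or_one (s i) with h | h
    · rw [h, Int.cast_zero, abs_nonpos_iff, sub_eq_zero] at h1
      rcases Int.emod_two_eq_zero_or_one (s' i) with h' | h'
      · rw [h', Int.cast_zero, abs_nonpos_iff, sub_eq_zero, h1] at h2
        exact Or.inl (by exact_mod_cast h2)
      · right
        rw [h1, h', abs_le] at h2
        have h3 : s i - s' i ≤ 1 := by exact_mod_cast h2.2
        have h4 : -1 ≤ s i - s' i := by exact_mod_cast h2.1
        omega
    · left
      have h3 : |t i - s i| < 1 := by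
        refine lt_of_le_of_ne (by simpa [h] using h1) fun h5 => hb ⟨hs, i, h, h5⟩
      rw [abs_lt] at h3
      rcases Int.emod_two_eq_zero_or_one (s' i) with h' | h'
      · rw [h', Int.cast_zero, abs_nonpos_iff, sub_eq_zero] at h2
        rw [h2] at h3
        have h4 : s' i - s i < 1 := by exact_mod_cast h3.2
        have h5 : -1 < s' i - s i := by exact_mod_cast h3.1
        omega
      · rw [h', abs_le] at h2
        have h4 : (s i : ℝ) - s' i < 2 := by push_cast at h2; linarith
        have h5 : -2 < (s i : ℝ) - s' i := by push_cast at h2; linarith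
        have h4' : s i - s' i < 2 := by exact_mod_cast h4
        have h5' : -2 < s i - s' i := by exact_mod_cast h5
        omega
  constructor
  · intro u hu i
    have h1 := hu i
    rcases key i with h | ⟨h, h', h''⟩
    · rwa [← h]
    · rw [h, Int.cast_zero, abs_nonpos_iff, sub_eq_zero] at h1
      rw [h1, h']
      rcases h'' with h'' | h'' <;> simp [h'']
  · by_cases hss : s = s'
    · exact Or.inl hss
    · right
      obtain ⟨i, hi⟩ := Function.ne_iff.1 hss
      apply Finset.card_lt_card
      rw [Finset.ssubset_iff_of_subset]
      · refine ⟨i, ?_, ?_⟩ <;> rcases key i with h | ⟨h, h', h''⟩ <;> simp_all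
      · intro i hi
        rcases key i with h | ⟨h, h', h''⟩ <;> simp_all

/-- A boundary point of a cell lies in a face of smaller dimension. -/
theorem exists_face_of_mem_boundary [Fintype ι] {s : ι → ℤ} {t : ι → ℝ}
    (ht : t ∈ gridCellBoundary s) :
    ∃ s', gridCell s' ⊆ gridCell s ∧ gridDim s' < gridDim s ∧ t ∈ gridCell s' := by
  classical
  obtain ⟨hts, i, hi, hti⟩ := ht
  obtain ⟨z, hz, hz'⟩ : ∃ z : ℤ, t i = z ∧ |(z : ℝ) - s i| = 1 := by
    rcases (abs_eq zero_le_one).1 hti with h | h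
    · exact ⟨s i + 1, by push_cast; linarith, by simp⟩
    · exact ⟨s i - 1, by push_cast; linarith, by simp⟩
  have hz2 : z % 2 = 0 := by
    have : |z - s i| = 1 := by exact_mod_cast hz'
    rcases (abs_eq zero_le_one).1 this with h | h <;> omega
  refine ⟨Function.update s i z, ?_, ?_, ?_⟩
  · intro u hu k
    have := hu k
    by_cases hk : k = i
    · subst hk
      simp only [Function.update_self, hz2, Int.cast_zero, abs_nonpos_iff, sub_eq_zero] at this
      rw [this, hi, hz']; simp
    · simpa [hk] using this
  · apply Finset.card_lt_card
    rw [Finset.ssubset_iff_of_subset]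
    · exact ⟨i, by simp [hi], by simp [hz2]⟩
    · intro k hk
      by_cases hki : k = i
      · subst hki; simp [hz2] at hk
      · simpa [hki] using hk
  · intro k
    by_cases hk : k = i
    · subst hk; simp [hz, hz2]
    · simpa [hk] using hts k

/-- Transfer of the extension property from the standard cube to a grid cell. -/
theorem SphereExtends.gridCell [Fintype ι] {Y : Type*} [TopologicalSpace Y] {s : ι → ℤ}
    {A B : Set Y} (h : SphereExtends (gridDim s) A B) {f : (ι → ℝ) → Y}
    (hf : ContinuousOn f (gridCellBoundary s)) (hfA : MapsTo f (gridCellBoundary s) A) :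
    ∃ g : (ι → ℝ) → Y, ContinuousOn g (_root_.gridCell s) ∧ MapsTo g (_root_.gridCell s) B ∧
      EqOn g f (gridCellBoundary s) := by
  classical
  let J := {i // s i % 2 = 1}
  have hJ : Fintype.card J = gridDim s := Fintype.card_subtype _
  let e : J ≃ Fin (gridDim s) := Fintype.equivFinOfCardEq hJ
  let E : (Fin (gridDim s) → ℝ) → (ι → ℝ) := fun u i =>
    (s i : ℝ) + if hi : s i % 2 = 1 then u (e ⟨i, hi⟩) else 0
  let Q : (ι → ℝ) → (Fin (gridDim s) → ℝ) := fun t k => t (e.symm k).1 - s (e.symm k).1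
  have hE : Continuous E := by
    refine continuous_pi fun i => ?_
    by_cases hi : s i % 2 = 1 <;> simp only [E, hi, dite_true, dite_false] <;> fun_prop
  have hQ : Continuous Q := by fun_prop
  have hEQ : ∀ t ∈ _root_.gridCell s, E (Q t) = t := by
    intro t ht
    funext i
    by_cases hi : s i % 2 = 1
    · simp [E, Q, hi]
    · have h0 : s i % 2 = 0 := by omega
      have := ht i
      rw [h0, Int.cast_zero, abs_nonpos_iff, sub_eq_zero] at this
      simp [E, h0, this]
  have hQE : ∀ u, Q (E u) = u := by
    intro u
    funext k
    have := (e.symm k).2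
    simp [E, Q, this]
  have hQs : MapsTo Q (_root_.gridCell s) (closedBall 0 1) := by
    intro t ht
    rw [mem_closedBall_zero_iff, pi_norm_le_iff_of_nonneg zero_le_one]
    intro k
    have := ht (e.symm k).1
    rw [(e.symm k).2] at this
    simpa [Q] using this
  have hEs : MapsTo E (sphere 0 1) (gridCellBoundary s) := by
    intro u hu
    rw [mem_sphere_zero_iff_norm] at hu
    refine ⟨fun i => ?_, ?_⟩
    · by_cases hi : s i % 2 = 1
      · have := norm_le_pi_norm u (e ⟨i, hi⟩)
        simpa [E, hi, hu] using this
      · have h0 : s i % 2 = 0 := by omega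
        simp [E, h0]
    · have hne : Nonempty (Fin (gridDim s)) := by
        by_contra hcon
        rw [not_nonempty_iff] at hcon
        rw [Subsingleton.elim u 0] at hu
        simp at hu
      obtain ⟨k, hk⟩ := (Set.finite_univ : (univ : Set (Fin (gridDim s))).Finite).exists_maximalFor
        (fun k => ‖u k‖) _ univ_nonempty
      have hk2 : ‖u k‖ = 1 := by
        refine le_antisymm (hu ▸ norm_le_pi_norm u k) ?_
        rw [← hu]
        refine (pi_norm_le_iff_of_nonneg (norm_nonneg _)).2 fun l => ?_
        rcases le_total ‖u l‖ ‖u k‖ with h | h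
        · exact h
        · exact hk.2 (mem_univ l) h
      refine ⟨(e.symm k).1, (e.symm k).2, ?_⟩
      have := (e.symm k).2
      simpa [E, this] using hk2
  have hQb : MapsTo Q (gridCellBoundary s) (sphere 0 1) := by
    intro t ht
    obtain ⟨hts, i, hi, hti⟩ := ht
    rw [mem_sphere_zero_iff_norm]
    refine le_antisymm (mem_closedBall_zero_iff.1 (hQs hts)) ?_
    have := norm_le_pi_norm (Q t) (e ⟨i, hi⟩)
    simpa [Q, hti] using this
  obtain ⟨g, hg, hgB, hgf⟩ := h (f ∘ E) (hf.comp hE.continuousOn hEs) (hfA.comp hEs)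
  refine ⟨g ∘ Q, hg.comp hQ.continuousOn hQs, hgB.comp hQs, fun t ht => ?_⟩
  simp only [Function.comp_apply]
  rw [hgf (hQb ht), Function.comp_apply, hEQ t ht.1]

/-- Cell-by-cell extension of a continuous map, controlled by carriers `G`. -/
theorem exists_extension_over_cells [Fintype ι] {Y : Type*} [TopologicalSpace Y]
    {K : Set (ι → ℝ)} (hK : IsClosed K) {f : (ι → ℝ) → Y} (hf : ContinuousOn f K)
    (G : ℕ → (ι → ℝ) → Set Y) (hG : ∀ t, Monotone fun p => G p t) (S : Finset (ι → ℤ))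
    (hS : ∀ s ∈ S, ∀ t ∈ gridCellBoundary s,
      t ∈ K ∨ ∃ s' ∈ S, gridDim s' < gridDim s ∧ t ∈ gridCell s')
    (hSK : ∀ s ∈ S, K ∩ gridCell s ⊆ gridCellBoundary s)
    (hfG : ∀ s ∈ S, ∀ t ∈ K ∩ gridCell s, f t ∈ G 0 t)
    (hext : ∀ s ∈ S, ∀ φ : (ι → ℝ) → Y, ContinuousOn φ (gridCellBoundary s) →
      (∀ t ∈ gridCellBoundary s, φ t ∈ G (gridDim s) t) →
      ∃ ψ : (ι → ℝ) → Y, ContinuousOn ψ (gridCell s) ∧ EqOn ψ φ (gridCellBoundary s) ∧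
        ∀ t ∈ gridCell s, ψ t ∈ G (gridDim s + 1) t) :
    ∃ g : (ι → ℝ) → Y, ContinuousOn g (K ∪ ⋃ s ∈ S, gridCell s) ∧ EqOn g f K ∧
      ∀ s ∈ S, ∀ t ∈ gridCell s, g t ∈ G (gridDim s + 1) t := by
  classical
  induction S using Finset.induction_on_max_value (fun s : ι → ℤ => gridDim s) with
  | empty => exact ⟨f, by simpa using hf, fun _ _ => rfl, by simp⟩
  | insert a S ha hmax ih =>
    obtain ⟨g, hg, hgf, hgG⟩ := ih
      (fun s hs t ht => by
        rcases hS s (Finset.mem_insert_of_mem hs) t ht with h | ⟨s', hs', hd, h⟩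
        · exact Or.inl h
        · rcases Finset.mem_insert.1 hs' with rfl | hs'
          · exact absurd (hmax s hs) (not_le.2 hd)
          · exact Or.inr ⟨s', hs', hd, h⟩)
      (fun s hs => hSK s (Finset.mem_insert_of_mem hs))
      (fun s hs => hfG s (Finset.mem_insert_of_mem hs))
      (fun s hs => hext s (Finset.mem_insert_of_mem hs))
    have haS := Finset.mem_insert_self a S
    set K' : Set (ι → ℝ) := K ∪ ⋃ s ∈ S, gridCell s with hK'
    have hK'c : IsClosed K' :=
      hK.union (S.finite_toSet.isClosed_biUnion fun s _ => isClosed_gridCell s)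
    have hba : ∀ t ∈ gridCellBoundary a, t ∈ K ∨ ∃ s' ∈ S, gridDim s' < gridDim a ∧
        t ∈ gridCell s' := by
      intro t ht
      rcases hS a haS t ht with h | ⟨s', hs', hd, h⟩
      · exact Or.inl h
      · rcases Finset.mem_insert.1 hs' with rfl | hs'
        · exact absurd hd (lt_irrefl _)
        · exact Or.inr ⟨s', hs', hd, h⟩
    have hbK' : gridCellBoundary a ⊆ K' := by
      intro t ht
      rcases hba t ht with h | ⟨s', hs', -, h⟩
      · exact Or.inl h
      · exact Or.inr (mem_iUnion₂.2 ⟨s', hs', h⟩)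
    have hK'a : K' ∩ gridCell a ⊆ gridCellBoundary a := by
      rintro t ⟨ht | ht, hta⟩
      · exact hSK a haS ⟨ht, hta⟩
      · obtain ⟨s', hs', hts'⟩ := mem_iUnion₂.1 ht
        by_contra hcon
        rcases (gridCell_face_of_mem hts' hta hcon).2 with rfl | h
        · exact ha hs'
        · exact absurd (hmax s' hs') (not_le.2 h)
    obtain ⟨ψ, hψ, hψg, hψG⟩ := hext a haS g (hg.mono hbK') (by
      intro t ht
      rcases hba t ht with h | ⟨s', hs', hd, h⟩
      · rw [hgf h]
        exact hG t (Nat.zero_le _) (hfG a haS t ⟨h, ht.1⟩)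
      · exact hG t (Nat.succ_le_of_lt hd) (hgG s' hs' t h))
    have hψ' : EqOn (fun t => if t ∈ K' then g t else ψ t) ψ (gridCell a) := by
      intro t ht
      by_cases h : t ∈ K'
      · simp only [h, if_true]
        exact (hψg (hK'a ⟨h, ht⟩)).symm
      · simp [h]
    have hg' : EqOn (fun t => if t ∈ K' then g t else ψ t) g K' := fun t ht => by simp [ht]
    refine ⟨fun t => if t ∈ K' then g t else ψ t, ?_, ?_, ?_⟩
    · have : K ∪ ⋃ s ∈ insert a S, gridCell s = K' ∪ gridCell a := by
        rw [Finset.set_biUnion_insert, hK', union_comm (gridCell a), union_assoc]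
      rw [this]
      exact (hg.congr hg').union_of_isClosed (hψ.congr hψ') hK'c (isClosed_gridCell a)
    · exact fun t ht => (hg' (Or.inl ht)).trans (hgf ht)
    · intro s hs t ht
      rcases Finset.mem_insert.1 hs with rfl | hs
      · rw [hψ' ht]; exact hψG t ht
      · rw [hg' (Or.inr (mem_iUnion₂.2 ⟨s, hs, ht⟩))]; exact hgG s hs t ht

end Grid

section ControlledExtension

/-- Maps of spheres of dimension less than `q` into `P`, small and near a point of `R`, extend over
the ball to small maps into `P`, uniformly. -/
def UniformlyExtends {Y : Type*} [MetricSpace Y] (q : ℕ) (R P : Set Y) : Prop :=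
  ∀ ε > 0, ∃ δ > 0, ∀ y ∈ R, ∀ j ≤ q, SphereExtends j (ball y δ ∩ P) (ball y ε ∩ P)

theorem exists_controlled_extension {Y : Type*} [MetricSpace Y] {q : ℕ} {R P : Set Y}
    (hUE : UniformlyExtends q R P) {ε : ℝ} (hε : 0 < ε) :
    ∃ η > 0, ∀ {ι : Type} [Fintype ι] (𝒦 L : Finset (ι → ℤ)), L ⊆ 𝒦 →
      (∀ s ∈ 𝒦, ∀ s', gridCell s' ⊆ gridCell s → s' ∈ 𝒦) →
      (∀ s ∈ L, ∀ s', gridCell s' ⊆ gridCell s → s' ∈ L) →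
      (∀ s ∈ 𝒦, gridDim s ≤ q) →
      ∀ (f ρ : (ι → ℝ) → Y), ContinuousOn f (⋃ s ∈ L, gridCell s) →
      (∀ s ∈ 𝒦, s ∉ L → ∀ t ∈ gridCell s, ρ t ∈ R) →
      (∀ s ∈ 𝒦, s ∉ L → ∀ t ∈ gridCell s, ∀ t' ∈ gridCell s, dist (ρ t) (ρ t') < η) →
      (∀ s ∈ 𝒦, s ∉ L → ∀ t ∈ gridCell s, t ∈ (⋃ s ∈ L, gridCell s) →
        f t ∈ P ∧ dist (f t) (ρ t) < η) →
      ∃ g : (ι → ℝ) → Y, ContinuousOn g (⋃ s ∈ 𝒦, gridCell s) ∧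
        EqOn g f (⋃ s ∈ L, gridCell s) ∧
        ∀ s ∈ 𝒦, s ∉ L → ∀ t ∈ gridCell s, g t ∈ P ∧ dist (g t) (ρ t) < ε := by
  classical
  have hδ : ∀ ε : ℝ, ∃ δ, 0 < ε → 0 < δ ∧ ∀ y ∈ R, ∀ j ≤ q,
      SphereExtends j (ball y δ ∩ P) (ball y ε ∩ P) := by
    intro ε
    by_cases h : 0 < ε
    · obtain ⟨δ, hδ, h'⟩ := hUE ε h
      exact ⟨δ, fun _ => ⟨hδ, h'⟩⟩
    · exact ⟨0, fun h' => absurd h' h⟩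
  choose δ hδ using hδ
  let a : ℕ → ℝ := fun n => Nat.rec ε (fun _ x => min (δ (x / 2) / 2) (x / 2)) n
  have ha0 : a 0 = ε := rfl
  have has : ∀ n, a (n + 1) = min (δ (a n / 2) / 2) (a n / 2) := fun n => rfl
  have hapos : ∀ n, 0 < a n := by
    intro n
    induction n with
    | zero => exact hε
    | succ n ih =>
      rw [has]
      exact lt_min (half_pos (hδ _ (half_pos ih)).1) (half_pos ih)
  have haanti : Antitone a := antitone_nat_of_succ_le fun n => by
    rw [has]
    exact (min_le_right _ _).trans (half_le_self (hapos n).le)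
  let e : ℕ → ℝ := fun p => a (q + 1 - p)
  have he : ∀ p ≤ q, e p = min (δ (e (p + 1) / 2) / 2) (e (p + 1) / 2) := by
    intro p hp
    have : q + 1 - p = (q + 1 - (p + 1)) + 1 := by omega
    simp only [e]
    rw [this, has]
  have hemono : Monotone e := fun p p' h => haanti (by omega)
  have heε : ∀ p, e p ≤ ε := fun p => haanti (Nat.zero_le _)
  refine ⟨e 0, (hapos (q + 1 - 0) : 0 < a (q + 1 - 0)), ?_⟩
  intro ι _ 𝒦 L hLK h𝒦 hL hdim f ρ hf hρR hρ hfρ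
  have hUnion : (⋃ s ∈ L, gridCell s) ∪ ⋃ s ∈ 𝒦 \ L, gridCell s = ⋃ s ∈ 𝒦, gridCell s := by
    rw [← Finset.set_biUnion_union, Finset.union_sdiff_of_subset hLK]
  obtain ⟨g, hg, hgf, hgG⟩ := exists_extension_over_cells
    (L.finite_toSet.isClosed_biUnion fun s _ => isClosed_gridCell s) hf
    (fun p t => ball (ρ t) (e p) ∩ P)
    (fun t p p' h => inter_subset_inter_left _ (ball_subset_ball (hemono h))) (𝒦 \ L)
    (by
      intro s hs t ht
      obtain ⟨hs𝒦, hsL⟩ := Finset.mem_sdiff.1 hs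
      obtain ⟨s', hs', hd, hts'⟩ := exists_face_of_mem_boundary ht
      have h1 := h𝒦 s hs𝒦 s' hs'
      by_cases h2 : s' ∈ L
      · exact Or.inl (mem_iUnion₂.2 ⟨s', h2, hts'⟩)
      · exact Or.inr ⟨s', Finset.mem_sdiff.2 ⟨h1, h2⟩, hd, hts'⟩)
    (by
      rintro s hs t ⟨ht, hts⟩
      obtain ⟨hs𝒦, hsL⟩ := Finset.mem_sdiff.1 hs
      obtain ⟨s', hs', hts'⟩ := mem_iUnion₂.1 ht
      by_contra hcon
      exact hsL (hL s' hs' s (gridCell_face_of_mem hts' hts hcon).1))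
    (by
      rintro s hs t ⟨ht, hts⟩
      obtain ⟨hs𝒦, hsL⟩ := Finset.mem_sdiff.1 hs
      have := hfρ s hs𝒦 hsL t hts ht
      exact ⟨this.2, this.1⟩)
    (by
      intro s hs φ hφ hφG
      obtain ⟨hs𝒦, hsL⟩ := Finset.mem_sdiff.1 hs
      have hc := center_mem_gridCell s
      set y := ρ fun i => (s i : ℝ) with hy
      have hq := hdim s hs𝒦
      have he' := he _ hq
      have hep : 0 < e (gridDim s + 1) := hapos _
      have hext := (hδ _ (half_pos hep)).2 y (hρR s hs𝒦 hsL _ hc) _ hq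
      obtain ⟨ψ, hψ, hψB, hψφ⟩ := hext.gridCell hφ (by
        intro t ht
        refine ⟨?_, (hφG t ht).2⟩
        have h1 : dist (φ t) (ρ t) < e (gridDim s) := (hφG t ht).1
        have h2 : dist (ρ t) y < e 0 := hρ s hs𝒦 hsL t ht.1 _ hc
        have h3 : e 0 ≤ e (gridDim s) := hemono (Nat.zero_le _)
        have h4 : e (gridDim s) ≤ δ (e (gridDim s + 1) / 2) / 2 := he'.le.trans (min_le_left _ _)
        have h5 := dist_triangle (φ t) (ρ t) y
        rw [mem_ball]
        linarith)
      refine ⟨ψ, hψ, hψφ, fun t ht => ⟨?_, (hψB ht).2⟩⟩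
      have h1 : dist (ψ t) y < e (gridDim s + 1) / 2 := (hψB ht).1
      have h2 : dist y (ρ t) < e 0 := hρ s hs𝒦 hsL _ hc t ht
      have h3 : e 0 ≤ e (gridDim s) := hemono (Nat.zero_le _)
      have h4 : e (gridDim s) ≤ e (gridDim s + 1) / 2 := he'.le.trans (min_le_right _ _)
      have h5 := dist_triangle (ψ t) y (ρ t)
      rw [mem_ball]
      linarith)
  simp only [Finset.mem_coe] at hg hgf
  rw [hUnion] at hg
  refine ⟨g, hg, hgf, fun s hs hsL t ht => ?_⟩
  have := hgG s (Finset.mem_sdiff.2 ⟨hs, hsL⟩) t ht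
  exact ⟨this.2, lt_of_lt_of_le this.1 (heε _)⟩

end ControlledExtension

section SphereGrid

variable {ι : Type} [Fintype ι]

theorem gridDim_lt_card_of_even {s : ι → ℤ} {i : ι} (hi : s i % 2 = 0) :
    gridDim s < Fintype.card ι := by
  refine Finset.card_lt_card ((Finset.ssubset_iff_of_subset (Finset.subset_univ _)).2
    ⟨i, Finset.mem_univ _, by simp [hi]⟩)

theorem dist_le_of_mem_gridCell {s : ι → ℤ} {t t' : ι → ℝ} (ht : t ∈ gridCell s)
    (ht' : t' ∈ gridCell s) : dist t t' ≤ 2 := by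
  refine (dist_pi_le_iff zero_le_two).2 fun i => ?_
  have h1 := ht i
  have h2 := ht' i
  have h3 : ((s i % 2 : ℤ) : ℝ) ≤ 1 := by
    exact_mod_cast Int.lt_add_one_iff.1 (Int.emod_lt_of_pos (s i) two_pos)
  rw [Real.dist_eq]
  have := abs_sub_le (t i) (s i) (t' i)
  rw [abs_sub_comm (s i : ℝ)] at this
  linarith

theorem exists_abs_eq_norm [Nonempty ι] (t : ι → ℝ) : ∃ i, |t i| = ‖t‖ := by
  obtain ⟨i, hi⟩ := Finite.exists_max fun i => ‖t i‖
  exact ⟨i, le_antisymm (norm_le_pi_norm t i)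
    ((pi_norm_le_iff_of_nonneg (norm_nonneg _)).2 hi)⟩

theorem exists_gridCell_subset_sphere {m : ℕ} (hm : 0 < m) {t : ι → ℝ}
    (ht : t ∈ sphere (0 : ι → ℝ) (2 * m)) :
    ∃ s : ι → ℤ, t ∈ gridCell s ∧ gridCell s ⊆ sphere 0 (2 * m) := by
  rw [mem_sphere_zero_iff_norm] at ht
  have hm' : (0 : ℝ) < m := by exact_mod_cast hm
  have hne : Nonempty ι := by
    by_contra hcon
    rw [not_nonempty_iff] at hcon
    rw [Subsingleton.elim t 0, norm_zero] at ht
    linarith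
  obtain ⟨i₀, hi₀⟩ := exists_abs_eq_norm t
  have habs : ∀ i, |t i| ≤ 2 * m := fun i => ht ▸ norm_le_pi_norm t i
  have key : ∀ x : ℝ, |x| ≤ 2 * m → ∃ z : ℤ, |x - z| ≤ ((z % 2 : ℤ) : ℝ) ∧
      |(z : ℝ)| + ((z % 2 : ℤ) : ℝ) ≤ 2 * m ∧ (|x| = 2 * m → z % 2 = 0) := by
    intro x hx
    by_cases hx2 : |x| = 2 * m
    · rcases (abs_eq (by positivity)).1 hx2 with h | h
      · refine ⟨2 * m, ?_, ?_, ?_⟩ <;> simp [h]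
      · refine ⟨-(2 * m), ?_, ?_, ?_⟩ <;> simp [h, Int.neg_emod]
    · have h1 : |x| < 2 * m := lt_of_le_of_ne hx hx2
      rw [abs_lt] at h1
      have hf1 := Int.floor_le (x / 2)
      have hf2 := Int.lt_floor_add_one (x / 2)
      set w := ⌊x / 2⌋ with hw
      have hwm : w < m := by
        have : (w : ℝ) < m := by linarith
        exact_mod_cast this
      have hwm' : -(m : ℤ) ≤ w := by
        have : (-(m : ℤ) - 1 : ℝ) < w := by push_cast; linarith
        have : (-(m : ℤ) - 1) < w := by exact_mod_cast this
        omega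
      have hodd : (2 * w + 1) % 2 = 1 := by omega
      refine ⟨2 * w + 1, ?_, ?_, fun h => absurd h hx2⟩
      · rw [hodd]; push_cast; rw [abs_le]; constructor <;> linarith
      · rw [hodd]
        have : |2 * w + 1| ≤ 2 * (m : ℤ) - 1 := by rw [abs_le]; constructor <;> omega
        have h2 : ((|2 * w + 1| : ℤ) : ℝ) ≤ ((2 * (m : ℤ) - 1 : ℤ) : ℝ) := by exact_mod_cast this
        push_cast at h2 ⊢
        linarith
  choose z hz1 hz2 hz3 using key
  refine ⟨fun i => z (t i) (habs i), fun i => hz1 _ _, fun u hu => ?_⟩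
  rw [mem_sphere_zero_iff_norm]
  apply le_antisymm
  · refine (pi_norm_le_iff_of_nonneg (by positivity)).2 fun i => ?_
    have h1 := hu i
    have h2 := hz2 _ (habs i)
    have h3 := abs_sub_abs_le_abs_sub (u i) (z (t i) (habs i))
    rw [Real.norm_eq_abs]
    dsimp only at h1
    linarith
  · have h0 := hz3 _ (habs i₀) (hi₀.trans ht)
    have h1 := hu i₀
    have h2 := hz1 _ (habs i₀)
    dsimp only at h1
    rw [h0, Int.cast_zero, abs_nonpos_iff, sub_eq_zero] at h1 h2
    have := norm_le_pi_norm u i₀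
    rw [h1, ← h2, Real.norm_eq_abs, hi₀, ht] at this
    exact this

theorem finite_gridCell_subset_sphere (ι : Type) [Fintype ι] (m : ℕ) :
    {s : ι → ℤ | gridCell s ⊆ sphere 0 (2 * m)}.Finite := by
  classical
  refine (Set.finite_Icc (fun _ : ι => -(2 * m : ℤ)) (fun _ => 2 * m)).subset fun s hs => ?_
  have h1 : ‖fun i => (s i : ℝ)‖ = 2 * m := by simpa using hs (center_mem_gridCell s)
  have h2 : ∀ i, |s i| ≤ 2 * m := fun i => by
    have := norm_le_pi_norm (fun i => (s i : ℝ)) i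
    rw [h1, Real.norm_eq_abs] at this
    exact_mod_cast this
  exact ⟨fun i => (abs_le.1 (h2 i)).1, fun i => (abs_le.1 (h2 i)).2⟩

theorem exists_even_of_gridCell_subset_sphere {m : ℕ} (hm : 0 < m) {s : ι → ℤ}
    (hs : gridCell s ⊆ sphere 0 (2 * m)) : ∃ i, s i % 2 = 0 := by
  have hm' : (0 : ℝ) < m := by exact_mod_cast hm
  have h1 : ‖fun i => (s i : ℝ)‖ = 2 * m := by simpa using hs (center_mem_gridCell s)
  have hne : Nonempty ι := by
    by_contra hcon
    rw [not_nonempty_iff] at hcon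
    rw [Subsingleton.elim (fun i => (s i : ℝ)) 0, norm_zero] at h1
    linarith
  obtain ⟨i, hi⟩ := exists_abs_eq_norm fun i => (s i : ℝ)
  refine ⟨i, ?_⟩
  rw [h1] at hi
  have : |s i| = 2 * m := by exact_mod_cast hi
  rcases abs_choice (s i) with h | h <;> omega

end SphereGrid

section Push

theorem abs_sub_le_of_gridCell_subset {ι : Type*} {s s' : ι → ℤ} (h : gridCell s' ⊆ gridCell s)
    (i : ι) : |s' i - s i| ≤ s i % 2 := by
  have := h (center_mem_gridCell s') i
  exact_mod_cast this

theorem gridCell_comp_some_subset {ι : Type*} {s s' : Option ι → ℤ}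
    (h : gridCell s' ⊆ gridCell s) : gridCell (s' ∘ some) ⊆ gridCell (s ∘ some) := by
  intro t ht i
  have : (fun o : Option ι => o.elim (s' none : ℝ) t) ∈ gridCell s' := by
    intro o
    cases o with
    | none => exact center_mem_gridCell s' none
    | some i => exact ht i
  exact h this (some i)

theorem comp_some_mem_gridCell {ι : Type*} {s : Option ι → ℤ} {t : Option ι → ℝ}
    (h : t ∈ gridCell s) : t ∘ some ∈ gridCell (s ∘ some) := fun i => h (some i)

theorem exists_continuousOn_extension {X Y : Type*} [TopologicalSpace X] [TopologicalSpace Y]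
    [Nonempty Y] {S : Set X} (φ : C(S, Y)) :
    ∃ f : X → Y, ContinuousOn f S ∧ ∀ x : S, f x = φ x := by
  classical
  have h : ∀ x : S, Function.extend Subtype.val φ (fun _ => Classical.arbitrary Y) x = φ x :=
    fun x => Subtype.val_injective.extend_apply _ _ _
  refine ⟨_, ?_, h⟩
  rw [continuousOn_iff_continuous_domRestrict]
  exact φ.continuous.congr fun x => (h x).symm

theorem exists_dist_lt_of_abs_sub_le {Y : Type*} [MetricSpace Y] [CompactSpace Y] {h : Y → ℝ}
    (hh : Continuous h) (c : ℝ) {θ : ℝ} (hθ : 0 < θ) :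
    ∃ δ > 0, ∀ y, |h y - c| ≤ δ → ∃ z, h z = c ∧ dist y z < θ := by
  let K : Set Y := {y | ∀ z, h z = c → θ ≤ dist y z}
  have hK : IsCompact K := by
    refine IsClosed.isCompact ?_
    simp only [K, ofPred_forall]
    exact isClosed_iInter fun z => isClosed_iInter fun _ =>
      isClosed_le continuous_const (by fun_prop)
  rcases K.eq_empty_or_nonempty with hne | hne
  · refine ⟨1, one_pos, fun y _ => ?_⟩
    have : y ∉ K := by simp [hne]
    simpa [K] using this
  · obtain ⟨y₀, hy₀, hmin⟩ := hK.exists_isMinOn hne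
      (f := fun y => |h y - c|) (by fun_prop)
    have hpos : 0 < |h y₀ - c| := by
      rw [abs_pos, sub_ne_zero]
      intro hc
      have := hy₀ y₀ hc
      rw [dist_self] at this
      exact hθ.not_ge this
    refine ⟨|h y₀ - c| / 2, half_pos hpos, fun y hy => ?_⟩
    have : y ∉ K := by
      intro hyK
      have := hmin hyK
      simp only [mem_ofPred_eq] at this
      linarith
    simpa [K] using this

variable {Y : Type*} [MetricSpace Y]

/-- A homotopy between two maps on a subdivided sphere which agree on the subcomplex `L`, are close
to each other and small on the remaining cells. -/
theorem exists_small_homotopy {k : ℕ} {R : Set Y} (hUE : UniformlyExtends (k + 1) R univ)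
    {ε : ℝ} (hε : 0 < ε) :
    ∃ η > 0, ∀ (m : ℕ), 0 < m → ∀ (L : Finset (Fin (k + 1) → ℤ)),
      (∀ s ∈ L, gridCell s ⊆ sphere 0 (2 * m)) →
      (∀ s ∈ L, ∀ s', gridCell s' ⊆ gridCell s → s' ∈ L) →
      ∀ f f' : (Fin (k + 1) → ℝ) → Y, ContinuousOn f (sphere 0 (2 * m)) →
      ContinuousOn f' (sphere 0 (2 * m)) → EqOn f' f (⋃ s ∈ L, gridCell s) →
      (∀ s, gridCell s ⊆ sphere 0 (2 * m) → s ∉ L → ∀ t ∈ gridCell s,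
        f t ∈ R ∧ dist (f' t) (f t) < η ∧ ∀ t' ∈ gridCell s, dist (f t) (f t') < η) →
      ∃ g : (Option (Fin (k + 1)) → ℝ) → Y,
        ContinuousOn g {t | t none ∈ Icc (0 : ℝ) 2 ∧ t ∘ some ∈ sphere 0 (2 * m : ℝ)} ∧
        ∀ t, t ∘ some ∈ sphere 0 (2 * m : ℝ) →
          (t none = 0 → g t = f (t ∘ some)) ∧ (t none = 2 → g t = f' (t ∘ some)) ∧
          (t none ∈ Icc (0 : ℝ) 2 → dist (g t) (f (t ∘ some)) < ε) := by
  classical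
  obtain ⟨η₀, hη₀, H⟩ := exists_controlled_extension hUE hε
  refine ⟨min η₀ ε, lt_min hη₀ hε, ?_⟩
  intro m hm L hLS hL f f' hf hf' hff' hsmall
  have hSclosed : IsClosed {t : Option (Fin (k + 1)) → ℝ | t ∘ some ∈ sphere 0 (2 * m : ℝ)} :=
    isClosed_sphere.preimage (f := fun t : Option (Fin (k + 1)) → ℝ => t ∘ some)
      (continuous_pi fun i => continuous_apply _)
  have hsome : Continuous fun t : Option (Fin (k + 1)) → ℝ => t ∘ some :=
    continuous_pi fun i => continuous_apply _
  have hSfin := finite_gridCell_subset_sphere (Fin (k + 1)) m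
  have hKfin : {s : Option (Fin (k + 1)) → ℤ | (0 ≤ s none ∧ s none ≤ 2) ∧
      gridCell (s ∘ some) ⊆ sphere 0 (2 * m)}.Finite := by
    have := ((Set.finite_Icc (0 : ℤ) 2).prod hSfin).image
      (fun x : ℤ × (Fin (k + 1) → ℤ) => fun o : Option (Fin (k + 1)) => o.elim x.1 x.2)
    refine this.subset ?_
    rintro s ⟨h1, h2⟩
    refine ⟨(s none, s ∘ some), ⟨h1, h2⟩, ?_⟩
    ext o
    cases o <;> rfl
  let 𝒦 := hKfin.toFinset
  have h𝒦 : ∀ s, s ∈ 𝒦 ↔ (0 ≤ s none ∧ s none ≤ 2) ∧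
      gridCell (s ∘ some) ⊆ sphere 0 (2 * m) := by simp [𝒦]
  let L' := 𝒦.filter fun s => s none = 0 ∨ s none = 2 ∨ s ∘ some ∈ L
  have hUL : IsClosed {t : Option (Fin (k + 1)) → ℝ | t ∘ some ∈ ⋃ s ∈ L, gridCell s} :=
    (L.finite_toSet.isClosed_biUnion fun s _ => isClosed_gridCell s).preimage hsome
  have hnone : ∀ s ∈ 𝒦, ∀ t ∈ gridCell s, t none ∈ Icc (0 : ℝ) 2 := by
    intro s hs t ht
    obtain ⟨⟨h0, h2⟩, -⟩ := (h𝒦 s).1 hs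
    have h := ht none
    have : s none = 0 ∨ s none = 1 ∨ s none = 2 := by omega
    rcases this with h' | h' | h' <;> simp [h', abs_le] at h <;> constructor <;> linarith
  let F : (Option (Fin (k + 1)) → ℝ) → Y := fun t =>
    if t none < 1 then f (t ∘ some) else f' (t ∘ some)
  have hFdist : ∀ s ∈ 𝒦, s ∉ L' → ∀ t ∈ gridCell s, dist (F t) (f (t ∘ some)) < min η₀ ε := by
    intro s hs hsL t ht
    have hsL1 : s ∘ some ∉ L := fun h => hsL (Finset.mem_filter.2 ⟨hs, by simp [h]⟩)
    have h1 := hsmall _ ((h𝒦 s).1 hs).2 hsL1 _ (comp_some_mem_gridCell ht)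
    simp only [F]
    split_ifs
    · simpa using ⟨hη₀, hε⟩
    · exact h1.2.1
  obtain ⟨g, hg, hgF, hgd⟩ := H 𝒦 L' (Finset.filter_subset _ _) (by
      intro s hs s' hs'
      have h := abs_sub_le_of_gridCell_subset hs' none
      rw [h𝒦] at hs ⊢
      refine ⟨?_, (gridCell_comp_some_subset hs').trans hs.2⟩
      rw [abs_le] at h
      omega) (by
      intro s hs s' hs'
      have h := abs_sub_le_of_gridCell_subset hs' none
      obtain ⟨hs1, hs2⟩ := Finset.mem_filter.1 hs
      rw [h𝒦] at hs1
      refine Finset.mem_filter.2 ⟨(h𝒦 _).2 ⟨?_,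
        (gridCell_comp_some_subset hs').trans hs1.2⟩, ?_⟩
      · rw [abs_le] at h
        omega
      · rw [abs_le] at h
        rcases hs2 with h2 | h2 | h2
        · left; omega
        · right; left; omega
        · exact Or.inr (Or.inr (hL _ h2 _ (gridCell_comp_some_subset hs')))) (by
      intro s hs
      obtain ⟨i, hi⟩ := exists_even_of_gridCell_subset_sphere hm ((h𝒦 s).1 hs).2
      have := gridDim_lt_card_of_even (i := some i) hi
      simp at this
      omega) F (fun t => f (t ∘ some)) (by
      have h0 : ContinuousOn F {t | t none = 0 ∧ t ∘ some ∈ sphere 0 (2 * m : ℝ)} := by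
        refine (hf.comp hsome.continuousOn (fun t ht => ht.2)).congr fun t ht => ?_
        simp [F, ht.1]
      have h2 : ContinuousOn F {t | t none = 2 ∧ t ∘ some ∈ sphere 0 (2 * m : ℝ)} := by
        refine (hf'.comp hsome.continuousOn (fun t ht => ht.2)).congr fun t ht => ?_
        simp [F, ht.1]
      have h1 : ContinuousOn F {t | t ∘ some ∈ ⋃ s ∈ L, gridCell s} := by
        refine (hf.comp hsome.continuousOn (fun t ht => ?_)).congr fun t ht => ?_
        · obtain ⟨s, hs, hst⟩ := mem_iUnion₂.1 ht
          exact hLS s hs hst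
        · simp only [F]
          split_ifs
          · rfl
          · exact hff' ht
      have hc : ∀ a : ℝ, IsClosed {t : Option (Fin (k + 1)) → ℝ |
          t none = a ∧ t ∘ some ∈ sphere 0 (2 * m : ℝ)} := fun a =>
        (isClosed_eq (continuous_apply _) continuous_const).inter hSclosed
      refine ((h0.union_of_isClosed h2 (hc 0) (hc 2)).union_of_isClosed h1
        ((hc 0).union (hc 2)) hUL).mono ?_
      intro t ht
      obtain ⟨s, hs, hst⟩ := mem_iUnion₂.1 ht
      obtain ⟨hs1, hs2⟩ := Finset.mem_filter.1 hs
      have h3 := ((h𝒦 s).1 hs1).2 (comp_some_mem_gridCell hst)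
      rcases hs2 with h | h | h
      · left; left
        refine ⟨?_, h3⟩
        have := hst none
        simpa [h] using this
      · left; right
        refine ⟨?_, h3⟩
        have := hst none
        simpa [h, sub_eq_zero] using this
      · right
        exact mem_iUnion₂.2 ⟨_, h, comp_some_mem_gridCell hst⟩) (by
      intro s hs hsL t ht
      have hsL1 : s ∘ some ∉ L := fun h => hsL (Finset.mem_filter.2 ⟨hs, by simp [h]⟩)
      exact (hsmall _ ((h𝒦 s).1 hs).2 hsL1 _ (comp_some_mem_gridCell ht)).1) (by
      intro s hs hsL t ht t' ht'
      have hsL1 : s ∘ some ∉ L := fun h => hsL (Finset.mem_filter.2 ⟨hs, by simp [h]⟩)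
      exact ((hsmall _ ((h𝒦 s).1 hs).2 hsL1 _ (comp_some_mem_gridCell ht)).2.2 _
        (comp_some_mem_gridCell ht')).trans_le (min_le_left _ _)) (by
      intro s hs hsL t ht _
      exact ⟨mem_univ _, (hFdist s hs hsL t ht).trans_le (min_le_left _ _)⟩)
  have hcell : ∀ t : Option (Fin (k + 1)) → ℝ, t none ∈ Icc (0 : ℝ) 2 →
      ∀ s, t ∘ some ∈ gridCell s → gridCell s ⊆ sphere 0 (2 * m : ℝ) →
      ∃ s' ∈ 𝒦, t ∈ gridCell s' ∧ s' ∘ some = s ∧ (t none = 0 → s' none = 0) ∧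
        (t none = 2 → s' none = 2) := by
    intro t ht0 s hts hs
    have : ∃ a : ℤ, 0 ≤ a ∧ a ≤ 2 ∧ |t none - a| ≤ ((a % 2 : ℤ) : ℝ) ∧ (t none = 0 → a = 0) ∧
        (t none = 2 → a = 2) := by
      by_cases h0 : t none = 0
      · exact ⟨0, by simp [h0]⟩
      by_cases h2 : t none = 2
      · exact ⟨2, by simp [h2]⟩
      refine ⟨1, by simp, by simp, ?_, fun h => absurd h h0, fun h => absurd h h2⟩
      have := ht0.1
      have := ht0.2
      simp [abs_le]
      constructor <;> linarith
    obtain ⟨a, ha0, ha2, hta, h1, h2⟩ := this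
    refine ⟨fun o => o.elim a s, (h𝒦 _).2 ⟨⟨ha0, ha2⟩, hs⟩, ?_, rfl, h1, h2⟩
    intro o
    cases o with
    | none => exact hta
    | some i => exact hts i
  refine ⟨g, hg.mono ?_, ?_⟩
  · rintro t ⟨ht1, ht2⟩
    obtain ⟨s, hts, hs⟩ := exists_gridCell_subset_sphere hm ht2
    obtain ⟨s', hs', hts', -⟩ := hcell t ht1 s hts hs
    exact mem_iUnion₂.2 ⟨s', hs', hts'⟩
  · intro t ht
    obtain ⟨s, hts, hs⟩ := exists_gridCell_subset_sphere hm ht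
    refine ⟨fun h0 => ?_, fun h0 => ?_, fun ht1 => ?_⟩
    · obtain ⟨s', hs', hts', -, h1, -⟩ := hcell t (by rw [h0]; norm_num) s hts hs
      rw [hgF (mem_iUnion₂.2 ⟨s', Finset.mem_filter.2 ⟨hs', Or.inl (h1 h0)⟩, hts'⟩)]
      simp [F, h0]
    · obtain ⟨s', hs', hts', -, -, h1⟩ := hcell t (by rw [h0]; norm_num) s hts hs
      rw [hgF (mem_iUnion₂.2 ⟨s', Finset.mem_filter.2 ⟨hs', Or.inr (Or.inl (h1 h0))⟩, hts'⟩)]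
      simp [F, h0]
    · obtain ⟨s', hs', hts', hss', h1⟩ := hcell t ht1 s hts hs
      by_cases hL' : s' ∈ L'
      · rw [hgF (mem_iUnion₂.2 ⟨s', hL', hts'⟩)]
        by_cases hsL : s ∈ L
        · simp only [F]
          split_ifs
          · rwa [dist_self]
          · rw [hff' (mem_iUnion₂.2 ⟨s, hsL, hts⟩)]
            rwa [dist_self]
        · simp only [F]
          split_ifs
          · rwa [dist_self]
          · exact (hsmall s hs hsL _ hts).2.1.trans_le (min_le_right _ _)
      · exact (hgd s' hs' hL' t hts').2

end Push

section Level

variable {Y : Type*} [MetricSpace Y] [CompactSpace Y]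

/-- Sphere maps slightly below the level `c` can be pushed above it by a small homotopy. -/
theorem exists_push {k : ℕ} {h : Y → ℝ} (hh : Continuous h) {c c₁ : ℝ} (hc : c < c₁)
    (hUE : UniformlyExtends (k + 1) {y | h y ≤ c₁} univ)
    (hUE' : UniformlyExtends k {y | h y = c} {y | c < h y}) {ε : ℝ} (hε : 0 < ε) :
    ∃ δ > 0, ∀ φ : C(sphere (0 : Fin (k + 1) → ℝ) 1, Y), (∀ x, c - δ ≤ h (φ x)) →
      ∃ φ' : C(sphere (0 : Fin (k + 1) → ℝ) 1, Y), (∀ x, c < h (φ' x)) ∧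
        ContinuousMap.HomotopicWith φ φ' fun ψ => ∀ x, dist (ψ x) (φ x) < ε := by
  classical
  obtain ⟨η₁, hη₁, H₁⟩ := exists_small_homotopy hUE hε
  obtain ⟨η₂, hη₂, H₂⟩ := exists_controlled_extension hUE' (half_pos hη₁)
  have hθ : 0 < min (η₂ / 3) (η₁ / 2) := lt_min (by positivity) (by positivity)
  obtain ⟨δ₁, hδ₁, hlevel⟩ := exists_dist_lt_of_abs_sub_le hh c hθ
  have hδ₀ : 0 < min δ₁ (c₁ - c) := lt_min hδ₁ (sub_pos.2 hc)
  set δ₀ := min δ₁ (c₁ - c) with hδ₀def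
  refine ⟨δ₀, hδ₀, fun φ hφ => ?_⟩
  have hne : Nonempty Y := ⟨φ ⟨fun _ => 1, by simp [pi_norm_const]⟩⟩
  obtain ⟨ψ, hψc, hψφ⟩ := exists_continuousOn_extension φ
  have huc := Metric.uniformContinuous_iff.1 (CompactSpace.uniformContinuous_of_continuous
    φ.continuous) (min (η₂ / 3) η₁) (lt_min (by positivity) hη₁)
  have huc' := Metric.uniformContinuous_iff.1 (CompactSpace.uniformContinuous_of_continuous
    (hh.comp φ.continuous)) δ₀ hδ₀
  obtain ⟨κ₁, hκ₁, hκ₁'⟩ := huc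
  obtain ⟨κ₂, hκ₂, hκ₂'⟩ := huc'
  obtain ⟨n, hn⟩ := exists_nat_one_div_lt (lt_min hκ₁ hκ₂)
  set m : ℕ := n + 1 with hm
  have hm0 : 0 < m := by omega
  have hm' : (0 : ℝ) < m := by exact_mod_cast hm0
  have hscale : ∀ t ∈ sphere (0 : Fin (k + 1) → ℝ) (2 * m), (2 * m : ℝ)⁻¹ • t ∈
      sphere (0 : Fin (k + 1) → ℝ) 1 := by
    intro t ht
    rw [mem_sphere_zero_iff_norm] at ht ⊢
    rw [norm_smul, ht, norm_inv, Real.norm_of_nonneg (by positivity)]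
    field_simp
  have hscale' : ∀ t ∈ sphere (0 : Fin (k + 1) → ℝ) 1, (2 * m : ℝ) • t ∈
      sphere (0 : Fin (k + 1) → ℝ) (2 * m) := by
    intro t ht
    rw [mem_sphere_zero_iff_norm] at ht ⊢
    rw [norm_smul, ht, Real.norm_of_nonneg (by positivity), mul_one]
  let f : (Fin (k + 1) → ℝ) → Y := fun t => ψ ((2 * m : ℝ)⁻¹ • t)
  have hf : ContinuousOn f (sphere 0 (2 * m)) :=
    hψc.comp (by fun_prop) hscale
  have hfφ : ∀ t (ht : t ∈ sphere (0 : Fin (k + 1) → ℝ) (2 * m)), f t = φ ⟨_, hscale t ht⟩ :=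
    fun t ht => hψφ ⟨_, hscale t ht⟩
  have hosc : ∀ s : Fin (k + 1) → ℤ, gridCell s ⊆ sphere 0 (2 * m) → ∀ t ∈ gridCell s,
      ∀ t' ∈ gridCell s, dist (f t) (f t') < min (η₂ / 3) η₁ ∧ |h (f t) - h (f t')| < δ₀ := by
    intro s hs t ht t' ht'
    have hd : dist ((2 * m : ℝ)⁻¹ • t) ((2 * m : ℝ)⁻¹ • t') < min κ₁ κ₂ := by
      rw [dist_smul₀, norm_inv, Real.norm_of_nonneg (by positivity)]
      refine lt_of_le_of_lt ?_ hn
      have := dist_le_of_mem_gridCell ht ht'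
      calc (2 * m : ℝ)⁻¹ * dist t t' ≤ (2 * m : ℝ)⁻¹ * 2 := by gcongr
        _ = 1 / (n + 1) := by rw [hm]; push_cast; field_simp
    rw [hfφ t (hs ht), hfφ t' (hs ht')]
    exact ⟨hκ₁' (lt_of_lt_of_le hd (min_le_left _ _)), hκ₂' (lt_of_lt_of_le hd (min_le_right _ _))⟩
  let 𝒦 := (finite_gridCell_subset_sphere (Fin (k + 1)) m).toFinset
  have h𝒦 : ∀ s, s ∈ 𝒦 ↔ gridCell s ⊆ sphere 0 (2 * m) := by simp [𝒦]
  let L := 𝒦.filter fun s => ∀ t ∈ gridCell s, c < h (f t)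
  have hfc : ∀ t ∈ sphere (0 : Fin (k + 1) → ℝ) (2 * m), c - δ₀ ≤ h (f t) := by
    intro t ht
    rw [hfφ t ht]
    exact hφ _
  have hnear : ∀ s ∈ 𝒦, s ∉ L → ∀ t ∈ gridCell s, |h (f t) - c| ≤ δ₀ := by
    intro s hs hsL t ht
    have : ∃ t' ∈ gridCell s, h (f t') ≤ c := by
      by_contra! hcon
      exact hsL (Finset.mem_filter.2 ⟨hs, hcon⟩)
    obtain ⟨t', ht', hct'⟩ := this
    have h1 := (abs_lt.1 (hosc s ((h𝒦 s).1 hs) t ht t' ht').2).2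
    have h2 := hfc t ((h𝒦 s).1 hs ht)
    rw [abs_le]
    constructor <;> linarith
  have hchoice : ∀ t : Fin (k + 1) → ℝ, ∃ z, |h (f t) - c| ≤ δ₀ →
      h z = c ∧ dist (f t) z < min (η₂ / 3) (η₁ / 2) := by
    intro t
    by_cases ht : |h (f t) - c| ≤ δ₀
    · obtain ⟨z, hz⟩ := hlevel (f t) (ht.trans (min_le_left _ _))
      exact ⟨z, fun _ => hz⟩
    · exact ⟨Classical.arbitrary Y, fun h => absurd h ht⟩
  choose ρ hρ using hchoice
  have hLface : ∀ s ∈ L, ∀ s', gridCell s' ⊆ gridCell s → s' ∈ L := by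
    intro s hs s' hs'
    obtain ⟨h1, h2⟩ := Finset.mem_filter.1 hs
    exact Finset.mem_filter.2 ⟨(h𝒦 _).2 (hs'.trans ((h𝒦 _).1 h1)), fun t ht => h2 t (hs' ht)⟩
  have hLS : ∀ s ∈ L, gridCell s ⊆ sphere 0 (2 * m) := fun s hs =>
    (h𝒦 s).1 (Finset.mem_filter.1 hs).1
  obtain ⟨g, hg, hgf, hgρ⟩ := H₂ 𝒦 L (Finset.filter_subset _ _)
    (fun s hs s' hs' => (h𝒦 _).2 (hs'.trans ((h𝒦 _).1 hs))) hLface (by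
      intro s hs
      obtain ⟨i, hi⟩ := exists_even_of_gridCell_subset_sphere hm0 ((h𝒦 s).1 hs)
      have := gridDim_lt_card_of_even hi
      simp at this
      omega) f ρ (hf.mono (iUnion₂_subset hLS))
    (fun s hs hsL t ht => (hρ t (hnear s hs hsL t ht)).1) (by
      intro s hs hsL t ht t' ht'
      have h1 := (hρ t (hnear s hs hsL t ht)).2
      have h2 := (hρ t' (hnear s hs hsL t' ht')).2
      have h3 := (hosc s ((h𝒦 s).1 hs) t ht t' ht').1
      have h4 := dist_triangle4 (ρ t) (f t) (f t') (ρ t')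
      rw [dist_comm (ρ t) (f t)] at h4
      have := min_le_left (η₂ / 3) (η₁ / 2)
      have := min_le_left (η₂ / 3) η₁
      linarith) (by
      intro s hs hsL t ht htL
      obtain ⟨s', hs', ht'⟩ := mem_iUnion₂.1 htL
      refine ⟨(Finset.mem_filter.1 hs').2 t ht', ?_⟩
      have h1 := (hρ t (hnear s hs hsL t ht)).2
      have := min_le_left (η₂ / 3) (η₁ / 2)
      linarith)
  have hU : (⋃ s ∈ 𝒦, gridCell s) = sphere 0 (2 * m) := by
    refine Subset.antisymm (iUnion₂_subset fun s hs => (h𝒦 s).1 hs) fun t ht => ?_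
    obtain ⟨s, hts, hs⟩ := exists_gridCell_subset_sphere hm0 ht
    exact mem_iUnion₂.2 ⟨s, (h𝒦 s).2 hs, hts⟩
  rw [hU] at hg
  obtain ⟨G, hG, hGt⟩ := H₁ m hm0 L hLS hLface f g hf hg hgf (by
    intro s hs hsL t ht
    have hs' := (h𝒦 s).2 hs
    have h0 := hnear s hs' hsL t ht
    refine ⟨?_, ?_, fun t' ht' => (hosc s hs t ht t' ht').1.trans_le (min_le_right _ _)⟩
    · have := (abs_le.1 h0).2
      have := min_le_right δ₁ (c₁ - c)
      simp only [mem_ofPred_eq]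
      linarith
    · have h1 := (hgρ s hs' hsL t ht).2
      have h2 := (hρ t h0).2
      have h3 := dist_triangle_right (g t) (f t) (ρ t)
      have := min_le_right (η₂ / 3) (η₁ / 2)
      linarith)
  have hback : ∀ x : sphere (0 : Fin (k + 1) → ℝ) 1, f ((2 * m : ℝ) • x.1) = φ x := by
    intro x
    rw [hfφ _ (hscale' x x.2)]
    congr 1
    ext1
    simp only [smul_smul]
    rw [inv_mul_cancel₀ (by positivity), one_smul]
  let φ' : C(sphere (0 : Fin (k + 1) → ℝ) 1, Y) := ⟨fun x => g ((2 * m : ℝ) • x.1),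
    hg.comp_continuous (by fun_prop) fun x => hscale' x x.2⟩
  let lift : unitInterval × sphere (0 : Fin (k + 1) → ℝ) 1 → Option (Fin (k + 1)) → ℝ :=
    fun x o => o.elim (2 * x.1.1) ((2 * m : ℝ) • x.2.1)
  have hlift : Continuous lift := by
    refine continuous_pi fun o => ?_
    cases o with
    | none => exact (continuous_const.mul (continuous_subtype_val.comp continuous_fst))
    | some i =>
      exact continuous_const.mul ((continuous_apply i).comp
        (continuous_subtype_val.comp continuous_snd))
  have hlift0 : ∀ x, lift x none ∈ Icc (0 : ℝ) 2 := by
    intro x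
    have h1 := x.1.2.1
    have h2 := x.1.2.2
    constructor
    · show (0 : ℝ) ≤ 2 * x.1.1
      linarith
    · show 2 * x.1.1 ≤ (2 : ℝ)
      linarith
  have hlift1 : ∀ x, lift x ∘ some ∈ sphere (0 : Fin (k + 1) → ℝ) (2 * m) := fun x =>
    hscale' x.2 x.2.2
  refine ⟨φ', ?_, ⟨⟨⟨⟨fun x => G (lift x), hG.comp_continuous hlift fun x =>
    ⟨hlift0 x, hlift1 x⟩⟩, ?_, ?_⟩, ?_⟩⟩⟩
  · intro x
    obtain ⟨s, hts, hs⟩ := exists_gridCell_subset_sphere hm0 (hscale' x x.2)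
    by_cases hsL : s ∈ L
    · show c < h (g _)
      rw [hgf (mem_iUnion₂.2 ⟨s, hsL, hts⟩)]
      exact (Finset.mem_filter.1 hsL).2 _ hts
    · exact (hgρ s ((h𝒦 s).2 hs) hsL _ hts).1
  · intro x
    show G (lift (0, x)) = φ x
    rw [(hGt _ (hlift1 (0, x))).1 (by simp [lift])]
    exact hback x
  · intro x
    show G (lift (1, x)) = φ' x
    rw [(hGt _ (hlift1 (1, x))).2.1 (by simp [lift])]
    rfl
  · intro τ x
    show dist (G (lift (τ, x))) (φ x) < ε
    rw [← hback x]
    exact (hGt _ (hlift1 (τ, x))).2.2 (hlift0 _)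

end Level

section Sweep

variable {Y : Type*} [MetricSpace Y]

theorem uniformlyExtends_of_isCompact {q : ℕ} {K P : Set Y} (hK : IsCompact K)
    (H : ∀ y ∈ K, ∀ W ∈ 𝓝 y, ∃ V ∈ 𝓝 y, ∀ j ≤ q, SphereExtends j (V ∩ P) (W ∩ P)) :
    UniformlyExtends q K P := by
  intro ε hε
  have H' : ∀ y : K, ∃ V ∈ 𝓝 (y : Y), ∀ j ≤ q,
      SphereExtends j (V ∩ P) (ball (y : Y) (ε / 2) ∩ P) :=
    fun y => H y y.2 _ (ball_mem_nhds _ (half_pos hε))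
  choose V hV hVE using H'
  obtain ⟨δ, hδ, hδV⟩ := lebesgue_number_lemma_of_metric hK
    (c := fun y : K => interior (V y) ∩ ball (y : Y) (ε / 2))
    (fun y => isOpen_interior.inter isOpen_ball)
    (fun y hy => mem_iUnion.2 ⟨⟨y, hy⟩, mem_interior_iff_mem_nhds.2 (hV ⟨y, hy⟩),
      mem_ball_self (half_pos hε)⟩)
  refine ⟨δ, hδ, fun z hz j hj => ?_⟩
  obtain ⟨y, hy⟩ := hδV z hz
  refine (hVE y j hj).mono (inter_subset_inter_left _ fun w hw => interior_subset (hy hw).1)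
    (inter_subset_inter_left _ (ball_subset_ball' ?_))
  have := (hy (mem_ball_self hδ)).2
  rw [mem_ball, dist_comm] at this
  linarith

theorem HomotopicWith.of_imp {X Z : Type*} [TopologicalSpace X] [TopologicalSpace Z]
    {f₀ f₁ : C(X, Z)} {P Q : C(X, Z) → Prop} (h : ContinuousMap.HomotopicWith f₀ f₁ P)
    (hPQ : ∀ f, P f → Q f) : ContinuousMap.HomotopicWith f₀ f₁ Q := by
  obtain ⟨F⟩ := h
  exact ⟨⟨F.toHomotopy, fun t => hPQ _ (F.prop' t)⟩⟩

theorem exists_raise [CompactSpace Y] {k : ℕ} {h : Y → ℝ} (hh : Continuous h) {M : ℝ}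
    (hUE : ∀ c < M, UniformlyExtends (k + 1) {y | h y ≤ c} univ)
    (hUE' : ∀ c < M, UniformlyExtends k {y | h y = c} {y | c < h y}) {c₀ c₁ ε : ℝ}
    (hc₁ : c₁ < M) (hε : 0 < ε)
    (φ : C(sphere (0 : Fin (k + 1) → ℝ) 1, Y)) (hφ : ∀ x, c₀ ≤ h (φ x)) :
    ∃ φ' : C(sphere (0 : Fin (k + 1) → ℝ) 1, Y), (∀ x, c₁ ≤ h (φ' x)) ∧
      ContinuousMap.HomotopicWith φ φ' fun ψ => ∀ x, c₀ - ε ≤ h (ψ x) := by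
  have hne : Nonempty (sphere (0 : Fin (k + 1) → ℝ) 1) := ⟨⟨fun _ => 1, by simp [pi_norm_const]⟩⟩
  obtain ⟨ε', hε', huc⟩ := Metric.uniformContinuous_iff.1
    (CompactSpace.uniformContinuous_of_continuous hh) ε hε
  let S : Set ℝ := {c | c₀ ≤ c ∧ ∃ φ' : C(sphere (0 : Fin (k + 1) → ℝ) 1, Y),
    (∀ x, c ≤ h (φ' x)) ∧ ContinuousMap.HomotopicWith φ φ' fun ψ => ∀ x, c₀ - ε ≤ h (ψ x)}
  by_contra hcon
  have hS : ∀ c ∈ S, c ≤ c₁ := by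
    rintro c ⟨-, φ', h1, h2⟩
    by_contra! hc
    exact hcon ⟨φ', fun x => hc.le.trans (h1 x), h2⟩
  have hbdd : BddAbove S := ⟨c₁, hS⟩
  have h0S : c₀ ∈ S := ⟨le_rfl, φ, hφ, .refl _ fun x => by linarith [hφ x]⟩
  have hsup : sSup S < M := (csSup_le ⟨_, h0S⟩ hS).trans_lt hc₁
  obtain ⟨c₂, hc₂, hc₂M⟩ := exists_between hsup
  obtain ⟨δ, hδ, hpush⟩ := exists_push hh hc₂ (hUE _ hc₂M) (hUE' _ hsup) hε'
  obtain ⟨c, ⟨hc0, φ₁, hφ₁, hφφ₁⟩, hc⟩ := exists_lt_of_lt_csSup ⟨_, h0S⟩ (sub_lt_self (sSup S) hδ)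
  obtain ⟨φ₂, hφ₂, hφ₁φ₂⟩ := hpush φ₁ fun x => hc.le.trans (hφ₁ x)
  obtain ⟨x₀, hx₀⟩ := (hh.comp φ₂.continuous).exists_forall_le_of_hasCompactMulSupport
    (.of_compactSpace _)
  refine (hφ₂ x₀).not_ge (le_csSup hbdd ⟨?_, φ₂, hx₀, hφφ₁.trans (HomotopicWith.of_imp hφ₁φ₂ ?_)⟩)
  · exact (le_csSup hbdd h0S).trans (hφ₂ x₀).le
  · intro ψ hψ x
    have := huc (hψ x)
    rw [Real.dist_eq, abs_lt] at this
    linarith [this.1, hφ₁ x]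

/-- Concatenation of infinitely many homotopies. -/
theorem exists_infinite_concatenation {D Z : Type*} [TopologicalSpace D] [TopologicalSpace Z]
    {φ : ℕ → C(D, Z)} (F : ∀ i, ContinuousMap.Homotopy (φ i) (φ (i + 1))) :
    ∃ G : ℝ × D → Z, ContinuousOn G (Ici 0 ×ˢ univ) ∧ (∀ x, G (0, x) = φ 0 x) ∧
      ∀ s x, ∃ τ, G (s, x) = F ⌊s⌋₊ (τ, x) := by
  let p : ℝ → unitInterval := projIcc 0 1 zero_le_one
  have hp : Continuous p := continuous_projIcc
  let A : ℕ → Set (ℝ × D) := fun i => Icc (i : ℝ) (i + 1) ×ˢ univ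
  let G : ℝ × D → Z := fun x => F ⌊x.1⌋₊ (p (x.1 - ⌊x.1⌋₊), x.2)
  have hA : LocallyFinite A := by
    rintro ⟨s, x⟩
    refine ⟨Iio (⌈s⌉₊ + 1 : ℝ) ×ˢ univ, prod_mem_nhds (Iio_mem_nhds ?_) Filter.univ_mem, ?_⟩
    · exact (Nat.le_ceil s).trans_lt (lt_add_one _)
    · refine (Set.finite_Iic (⌈s⌉₊ + 1)).subset ?_
      rintro i ⟨⟨s', x'⟩, ⟨h1, -⟩, ⟨h2, -⟩⟩
      have : (i : ℝ) < ⌈s⌉₊ + 1 := lt_of_le_of_lt h1.1 h2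
      have : i < ⌈s⌉₊ + 1 := by exact_mod_cast this
      exact this.le
  have hcover : Ici (0 : ℝ) ×ˢ (univ : Set D) ⊆ ⋃ i, A i := by
    rintro ⟨s, x⟩ ⟨hs, -⟩
    exact mem_iUnion.2 ⟨⌊s⌋₊, ⟨Nat.floor_le hs, (Nat.lt_floor_add_one s).le⟩, mem_univ _⟩
  refine ⟨G, (hA.continuousOn_iUnion (fun i => isClosed_Icc.prod isClosed_univ) ?_).mono hcover,
    fun x => ?_, fun s x => ⟨_, rfl⟩⟩
  · intro i
    have : Continuous fun x : ℝ × D => F i (p (x.1 - i), x.2) := by fun_prop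
    refine this.continuousOn.congr ?_
    rintro ⟨s, x⟩ ⟨⟨h1, h2⟩, -⟩
    rcases eq_or_lt_of_le h2 with h | h
    · have hfl : ⌊s⌋₊ = i + 1 := by
        simp only at h
        rw [h]
        exact_mod_cast Nat.floor_natCast (R := ℝ) (i + 1)
      have e1 : p (s - i) = 1 := by
        simp only at h
        simp [p, h]
      have e2 : p (s - (i + 1 : ℕ)) = 0 := by
        simp only at h
        simp [p, h]
      show F ⌊s⌋₊ (p (s - ⌊s⌋₊), x) = F i (p (s - i), x)
      rw [hfl, e1, e2]
      simp
    · have hfl : ⌊s⌋₊ = i := by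
        rw [Nat.floor_eq_iff ((Nat.cast_nonneg i).trans h1)]
        exact ⟨h1, h⟩
      show F ⌊s⌋₊ (p (s - ⌊s⌋₊), x) = F i (p (s - i), x)
      rw [hfl]
  · show F ⌊(0 : ℝ)⌋₊ (p (0 - ⌊(0 : ℝ)⌋₊), x) = _
    simp [p]

theorem exists_superlevel_subset [CompactSpace Y] {h : Y → ℝ} (hh : Continuous h) {z : Y}
    (hz : ∀ y, y ≠ z → h y < h z) {U : Set Y} (hU : U ∈ 𝓝 z) :
    ∃ c < h z, ∀ y, c < h y → y ∈ U := by
  have hK : IsCompact (interior U)ᶜ := isOpen_interior.isClosed_compl.isCompact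
  rcases (interior U)ᶜ.eq_empty_or_nonempty with he | hne
  · refine ⟨h z - 1, by linarith, fun y _ => interior_subset ?_⟩
    have : y ∉ (interior U)ᶜ := by simp [he]
    simpa using this
  · obtain ⟨y₀, hy₀, hmax⟩ := hK.exists_isMaxOn hne hh.continuousOn
    refine ⟨h y₀, hz _ ?_, fun y hy => interior_subset ?_⟩
    · rintro rfl
      exact hy₀ (mem_interior_iff_mem_nhds.2 hU)
    · by_contra hyU
      exact hy.not_ge (hmax hyU)

/-- A Morse-theoretic criterion: a function with a unique maximum whose strict superlevel sets are
locally connected up to dimension `k - 1` near every point below the maximum forces every map of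
the `k`-sphere to extend over the ball. -/
theorem sphereExtends_of_superlevel [CompactSpace Y] {k : ℕ} {h : Y → ℝ} (hh : Continuous h)
    {z : Y} (hz : ∀ y, y ≠ z → h y < h z)
    (H : ∀ y, y ≠ z → ∀ W ∈ 𝓝 y, ∃ V ∈ 𝓝 y, ∀ j ≤ k + 1, SphereExtends j V W)
    (H' : ∀ y, y ≠ z → ∀ W ∈ 𝓝 y, ∃ V ∈ 𝓝 y, ∀ j ≤ k,
      SphereExtends j (V ∩ {w | h y < h w}) (W ∩ {w | h y < h w})) :
    SphereExtends (k + 1) (univ : Set Y) univ := by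
  classical
  have hne : Nonempty (sphere (0 : Fin (k + 1) → ℝ) 1) := ⟨⟨fun _ => 1, by simp [pi_norm_const]⟩⟩
  have hlt : ∀ {c y}, c < h z → h y ≤ c → y ≠ z := by
    rintro c y hc hy rfl
    exact hc.not_ge hy
  have hUE : ∀ c < h z, UniformlyExtends (k + 1) {y | h y ≤ c} univ := fun c hc =>
    uniformlyExtends_of_isCompact (isClosed_le hh continuous_const).isCompact
      fun y hy W hW => by simpa using H y (hlt hc hy) W hW
  have hUE' : ∀ c < h z, UniformlyExtends k {y | h y = c} {y | c < h y} := fun c hc =>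
    uniformlyExtends_of_isCompact (isClosed_eq hh continuous_const).isCompact
      fun y hy W hW => by
        have := H' y (hlt hc (le_of_eq hy)) W hW
        rwa [show h y = c from hy] at this
  intro f hf _
  let φ₀ : C(sphere (0 : Fin (k + 1) → ℝ) 1, Y) := ⟨fun x => f x, hf.comp_continuous
    continuous_subtype_val fun x => x.2⟩
  obtain ⟨x₀, hx₀⟩ := (hh.comp φ₀.continuous).exists_forall_le_of_hasCompactMulSupport
    (.of_compactSpace _)
  have hamax : h (φ₀ x₀) ≤ h z := by
    by_cases hxz : φ₀ x₀ = z
    · rw [hxz]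
    · exact (hz _ hxz).le
  set B : ℝ := h z - h (φ₀ x₀) + 1 with hB
  have hBpos : 0 < B := by linarith
  let c : ℕ → ℝ := fun i => h z - B / (i + 1)
  have hcz : ∀ i, c i < h z := fun i => by
    have : 0 < B / ((i : ℝ) + 1) := by positivity
    simp only [c]
    linarith
  have step : ∀ i (φ : C(sphere (0 : Fin (k + 1) → ℝ) 1, Y)), (∀ x, c i ≤ h (φ x)) →
      ∃ φ' : C(sphere (0 : Fin (k + 1) → ℝ) 1, Y), (∀ x, c (i + 1) ≤ h (φ' x)) ∧
      ContinuousMap.HomotopicWith φ φ' fun ψ => ∀ x, c i - 1 / ((i : ℝ) + 1) ≤ h (ψ x) :=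
    fun i φ hφ => exists_raise hh hUE hUE' (hcz _) (by positivity) φ hφ
  choose next hnext hnextH using step
  let seq : ∀ i, {φ : C(sphere (0 : Fin (k + 1) → ℝ) 1, Y) // ∀ x, c i ≤ h (φ x)} := fun i =>
    Nat.rec ⟨φ₀, fun x => by
      refine le_trans ?_ (hx₀ x)
      simp only [c, Function.comp, Nat.cast_zero, zero_add, div_one]
      linarith⟩ (fun i φ => ⟨next i φ.1 φ.2, hnext i φ.1 φ.2⟩) i
  have hF : ∀ i, ContinuousMap.HomotopicWith (seq i).1 (seq (i + 1)).1
      fun ψ => ∀ x, c i - 1 / ((i : ℝ) + 1) ≤ h (ψ x) := fun i => hnextH i (seq i).1 (seq i).2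
  let F := fun i => (hF i).some
  obtain ⟨G, hG, hG0, hGF⟩ := exists_infinite_concatenation
    (φ := fun i => (seq i).1) fun i => (F i).toHomotopy
  have hGh : ∀ s x, h z - (B + 1) / (⌊s⌋₊ + 1) ≤ h (G (s, x)) := by
    intro s x
    obtain ⟨τ, hτ⟩ := hGF s x
    rw [hτ]
    refine le_trans (le_of_eq ?_) ((F ⌊s⌋₊).prop' τ x)
    simp only [c]
    ring
  have hnorm : ∀ x : Fin (k + 1) → ℝ, x ≠ 0 → ‖x‖⁻¹ • x ∈ sphere (0 : Fin (k + 1) → ℝ) 1 := by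
    intro x hx
    rw [mem_sphere_zero_iff_norm, norm_smul, norm_inv, norm_norm,
      inv_mul_cancel₀ (norm_ne_zero_iff.2 hx)]
  let g : (Fin (k + 1) → ℝ) → Y := fun x =>
    if hx : x ≠ 0 then G (max 0 (‖x‖⁻¹ - 1), ⟨‖x‖⁻¹ • x, hnorm x hx⟩) else z
  have hg0 : ContinuousOn g {x | x ≠ 0} := by
    rw [continuousOn_iff_continuous_domRestrict]
    have hinv : Continuous fun x : {x : Fin (k + 1) → ℝ | x ≠ 0} => ‖x.1‖⁻¹ :=
      Continuous.inv₀ (by fun_prop) fun x => norm_ne_zero_iff.2 x.2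
    have : Continuous fun x : {x : Fin (k + 1) → ℝ | x ≠ 0} =>
        G (max 0 (‖x.1‖⁻¹ - 1), ⟨‖x.1‖⁻¹ • x.1, hnorm x x.2⟩) := by
      refine hG.comp_continuous (Continuous.prodMk (by fun_prop)
        (Continuous.subtype_mk (hinv.smul continuous_subtype_val) _)) fun x => ?_
      exact ⟨mem_Ici.2 (le_max_left _ _), mem_univ _⟩
    refine this.congr fun x => ?_
    have hx : x.1 ≠ 0 := x.2
    simp [g, hx]
  refine ⟨g, fun x hx => ?_, fun _ _ => mem_univ _, fun x hx => ?_⟩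
  · by_cases hx0 : x = 0
    · subst hx0
      refine ContinuousAt.continuousWithinAt ?_
      intro U hU
      have hU' : U ∈ 𝓝 z := by simpa [g] using hU
      obtain ⟨c', hc', hcU⟩ := exists_superlevel_subset hh hz hU'
      obtain ⟨N, hN⟩ := exists_nat_gt ((B + 1) / (h z - c'))
      have hc'' : 0 < h z - c' := by linarith
      refine Filter.mem_map.2 (Filter.mem_of_superset (ball_mem_nhds 0
        (show (0 : ℝ) < 1 / (N + 1) by positivity)) fun x hx => ?_)
      by_cases hx0 : x = 0
      · subst hx0
        exact (mem_of_mem_nhds hU : g 0 ∈ U)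
      · refine hcU _ ?_
        simp only [g, dif_pos (show x ≠ 0 from hx0)]
        refine lt_of_lt_of_le ?_ (hGh _ _)
        have hxpos := norm_pos_iff.2 hx0
        rw [mem_ball_zero_iff, lt_div_iff₀ (by positivity)] at hx
        have h1 : (N : ℝ) ≤ ‖x‖⁻¹ - 1 := by
          have : (N + 1 : ℝ) ≤ ‖x‖⁻¹ := by
            rw [← one_div, le_div_iff₀ hxpos]
            linarith
          linarith
        have h2 : N ≤ ⌊max 0 (‖x‖⁻¹ - 1)⌋₊ := Nat.le_floor (h1.trans (le_max_right _ _))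
        have h3 : (N : ℝ) ≤ ⌊max 0 (‖x‖⁻¹ - 1)⌋₊ := by exact_mod_cast h2
        rw [div_lt_iff₀ hc''] at hN
        have : (B + 1) / (⌊max 0 (‖x‖⁻¹ - 1)⌋₊ + 1) < h z - c' := by
          rw [div_lt_iff₀ (by positivity)]
          nlinarith
        linarith
    · exact (hg0.continuousAt (isOpen_ne.mem_nhds hx0)).continuousWithinAt
  · have hx1 : ‖x‖ = 1 := mem_sphere_zero_iff_norm.1 hx
    have hx0 : x ≠ 0 := by
      rintro rfl
      simp at hx1
    have e : (⟨‖x‖⁻¹ • x, hnorm x hx0⟩ : sphere (0 : Fin (k + 1) → ℝ) 1) = ⟨x, hx⟩ := by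
      ext1
      simp [hx1]
    simp only [g, dif_pos hx0]
    rw [e, hx1]
    simp only [inv_one, sub_self, max_self]
    rw [hG0]
    rfl

end Sweep

section Connectivity

variable {Y : Type*} [TopologicalSpace Y]

theorem pathConnectedSpace_of_sphereExtends [Nonempty Y]
    (H : SphereExtends 1 (univ : Set Y) univ) : PathConnectedSpace Y := by
  classical
  refine ⟨inferInstance, fun x y => ?_⟩
  obtain ⟨g, hg, -, hgf⟩ := H (fun t => if t 0 < 0 then x else y) (by
    have hneg : ContinuousOn (fun t : Fin 1 → ℝ => if t 0 < 0 then x else y) {t | t 0 ≤ -1} :=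
      continuousOn_const.congr fun t ht => if_pos (by simp only [mem_ofPred_eq] at ht; linarith)
    have hpos : ContinuousOn (fun t : Fin 1 → ℝ => if t 0 < 0 then x else y) {t | 1 ≤ t 0} :=
      continuousOn_const.congr fun t ht => if_neg (by simp only [mem_ofPred_eq] at ht; linarith)
    refine (hneg.union_of_isClosed hpos (isClosed_le (by fun_prop) (by fun_prop))
      (isClosed_le (by fun_prop) (by fun_prop))).mono fun t ht => ?_
    obtain ⟨i, hi⟩ := exists_abs_eq_norm t
    rw [mem_sphere_zero_iff_norm.1 ht, Subsingleton.elim i 0] at hi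
    rcases abs_choice (t 0) with h | h
    · right
      simp only [mem_ofPred_eq]
      linarith
    · left
      simp only [mem_ofPred_eq]
      linarith) (fun _ _ => mem_univ _)
  refine ⟨⟨⟨fun s => g fun _ => 2 * (s : ℝ) - 1, hg.comp_continuous (by fun_prop) fun s => ?_⟩,
    ?_, ?_⟩⟩
  · rw [mem_closedBall_zero_iff, pi_norm_const, Real.norm_eq_abs, abs_le]
    have := s.2.1
    have := s.2.2
    constructor <;> linarith
  · simp only
    rw [hgf (by simp [pi_norm_const])]
    norm_num
  · simp only
    rw [hgf (by simp [pi_norm_const]; norm_num)]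
    norm_num

theorem subsingleton_homotopyGroup_of_sphereExtends {k : ℕ}
    (H : SphereExtends (k + 1) (univ : Set Y) univ) (y : Y) :
    Subsingleton (HomotopyGroup (Fin k) Y y) := by
  classical
  refine ⟨fun a b => ?_⟩
  induction a using Quotient.inductionOn with | _ p => ?_
  induction b using Quotient.inductionOn with | _ q => ?_
  refine Quotient.sound ?_
  let clamp : (Fin k → ℝ) → Fin k → unitInterval := fun t i => projIcc 0 1 zero_le_one ((t i + 1) / 2)
  have hclamp : Continuous clamp := continuous_pi fun i => continuous_projIcc.comp (by fun_prop)
  have hclamp_bd : ∀ t, ‖t‖ = 1 → clamp t ∈ Cube.boundary (Fin k) := by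
    intro t ht
    have hne : Nonempty (Fin k) := by
      by_contra hcon
      rw [not_nonempty_iff] at hcon
      rw [Subsingleton.elim t 0, norm_zero] at ht
      exact zero_ne_one ht
    obtain ⟨i, hi⟩ := exists_abs_eq_norm t
    rw [ht] at hi
    refine ⟨i, ?_⟩
    rcases eq_or_eq_neg_of_abs_eq hi with h | h
    · right
      simp [clamp, h]
    · left
      simp [clamp, h]
  have hclamp_id : ∀ u : Fin k → unitInterval, clamp (fun i => 2 * (u i : ℝ) - 1) = u := by
    intro u
    ext i
    simp [clamp]
  let F : (Fin (k + 1) → ℝ) → Y := fun x =>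
    if x 0 ≤ 0 then p (clamp (Fin.tail x)) else q (clamp (Fin.tail x))
  have htail : Continuous fun x : Fin (k + 1) → ℝ => Fin.tail x :=
    continuous_pi fun i => continuous_apply _
  have htail1 : ∀ x : Fin (k + 1) → ℝ, ‖x‖ = 1 → |x 0| < 1 → ‖Fin.tail x‖ = 1 := by
    intro x hx h0
    refine le_antisymm ((pi_norm_le_iff_of_nonneg zero_le_one).2 fun i =>
      hx ▸ norm_le_pi_norm x i.succ) ?_
    obtain ⟨i, hi⟩ := exists_abs_eq_norm x
    rw [hx] at hi
    rcases Fin.eq_zero_or_eq_succ i with rfl | ⟨j, rfl⟩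
    · exact absurd hi h0.ne
    · rw [← hi]
      exact norm_le_pi_norm (Fin.tail x) j
  have hF : ContinuousOn F (sphere 0 1) := by
    have h1 : ContinuousOn F (sphere 0 1 ∩ {x | x 0 ≤ 0}) :=
      (p.1.continuous.comp (hclamp.comp htail)).continuousOn.congr fun x hx => if_pos hx.2
    have h2 : ContinuousOn F (sphere 0 1 ∩ {x | 0 ≤ x 0}) := by
      refine (q.1.continuous.comp (hclamp.comp htail)).continuousOn.congr fun x hx => ?_
      by_cases h0 : x 0 ≤ 0
      · have h0' : x 0 = 0 := le_antisymm h0 hx.2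
        have hb := hclamp_bd _ (htail1 x (mem_sphere_zero_iff_norm.1 hx.1) (by simp [h0']))
        show (if x 0 ≤ 0 then p (clamp (Fin.tail x)) else q (clamp (Fin.tail x))) =
          q (clamp (Fin.tail x))
        rw [if_pos h0, GenLoop.boundary p _ hb, GenLoop.boundary q _ hb]
      · exact if_neg h0
    have hc1 : IsClosed {x : Fin (k + 1) → ℝ | x 0 ≤ 0} :=
      isClosed_le (continuous_apply _) continuous_const
    have hc2 : IsClosed {x : Fin (k + 1) → ℝ | 0 ≤ x 0} :=
      isClosed_le continuous_const (continuous_apply _)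
    refine (h1.union_of_isClosed h2 (isClosed_sphere.inter hc1) (isClosed_sphere.inter hc2)).mono
      fun x hx => ?_
    rcases le_total (x 0) 0 with h | h
    · exact Or.inl ⟨hx, h⟩
    · exact Or.inr ⟨hx, h⟩
  obtain ⟨g, hg, -, hgF⟩ := H F hF fun _ _ => mem_univ _
  let e : unitInterval × (Fin k → unitInterval) → Fin (k + 1) → ℝ := fun x =>
    Fin.cons (2 * (x.1 : ℝ) - 1) fun i => 2 * (x.2 i : ℝ) - 1
  have he : Continuous e := by
    refine continuous_pi fun i => ?_
    rcases Fin.eq_zero_or_eq_succ i with rfl | ⟨j, rfl⟩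
    · simp only [e, Fin.cons_zero]
      fun_prop
    · simp only [e, Fin.cons_succ]
      fun_prop
  have hI : ∀ u : unitInterval, |2 * (u : ℝ) - 1| ≤ 1 := fun u => by
    have := u.2.1
    have := u.2.2
    rw [abs_le]
    constructor <;> linarith
  have he1 : ∀ x, ‖e x‖ ≤ 1 := fun x => by
    refine (pi_norm_le_iff_of_nonneg zero_le_one).2 fun i => ?_
    rcases Fin.eq_zero_or_eq_succ i with rfl | ⟨j, rfl⟩
    · exact hI _
    · exact hI _
  have hsph : ∀ x i, |e x i| = 1 → e x ∈ sphere (0 : Fin (k + 1) → ℝ) 1 := fun x i hi =>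
    mem_sphere_zero_iff_norm.2 (le_antisymm (he1 x) (hi ▸ norm_le_pi_norm (e x) i))
  have htaile : ∀ x, clamp (Fin.tail (e x)) = x.2 := fun x => hclamp_id x.2
  refine ⟨⟨⟨⟨fun x => g (e x), hg.comp_continuous he fun x => mem_closedBall_zero_iff.2 (he1 x)⟩,
    fun u => ?_, fun u => ?_⟩, fun τ u hu => ?_⟩⟩
  · show g (e (0, u)) = p u
    rw [hgF (hsph (0, u) 0 (by simp [e]))]
    simp only [F, htaile]
    simp [e]
  · show g (e (1, u)) = q u
    rw [hgF (hsph (1, u) 0 (by simp [e]; norm_num))]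
    simp only [F, htaile]
    rw [if_neg]
    simp [e]
  · show g (e (τ, u)) = p u
    have hu' := hu
    obtain ⟨i, hi⟩ := hu
    have : |e (τ, u) i.succ| = 1 := by
      rcases hi with hi | hi <;> simp [e, hi]
      norm_num
    rw [hgF (hsph (τ, u) i.succ this)]
    simp only [F, htaile]
    rw [GenLoop.boundary p _ hu', GenLoop.boundary q _ hu', ite_self]

theorem spaceMConnected_of_sphereExtends [Nonempty Y] {m : ℕ}
    (H : ∀ k ≤ m, SphereExtends (k + 1) (univ : Set Y) univ) : SpaceMConnected m Y :=
  ⟨inferInstance, pathConnectedSpace_of_sphereExtends (H 0 (Nat.zero_le _)),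
    fun k _ hk y => subsingleton_homotopyGroup_of_sphereExtends (H k hk) y⟩

end Connectivity

section Compactification

theorem SphereExtends.image_isEmbedding {A Y : Type*} [TopologicalSpace A] [TopologicalSpace Y]
    [Nonempty A] {e : A → Y} (he : IsEmbedding e) {j : ℕ} {S T : Set A}
    (h : SphereExtends j S T) : SphereExtends j (e '' S) (e '' T) := by
  intro f hf hfS
  have hinv : ∀ x ∈ sphere (0 : Fin j → ℝ) 1, e (Function.invFun e (f x)) = f x := fun x hx => by
    obtain ⟨a, -, ha⟩ := hfS hx
    exact Function.invFun_eq ⟨a, ha⟩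
  obtain ⟨g, hg, hgT, hgf⟩ := h (fun x => Function.invFun e (f x))
    (he.isInducing.continuousOn_iff.2 (hf.congr hinv)) (fun x hx => by
      obtain ⟨a, haS, ha⟩ := hfS hx
      simp only
      rw [← ha, Function.leftInverse_invFun he.injective a]
      exact haS)
  exact ⟨e ∘ g, he.continuous.comp_continuousOn hg, fun x hx => mem_image_of_mem e (hgT hx),
    fun x hx => by rw [Function.comp_apply, hgf hx, hinv x hx]⟩

theorem SphereExtends.preimage_subtype_val {E : Type*} [TopologicalSpace E] {X : Set E} {j : ℕ}
    {S T : Set E} (h : SphereExtends j (S ∩ X) (T ∩ X)) (hX : X.Nonempty) :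
    SphereExtends j (Subtype.val ⁻¹' S : Set X) (Subtype.val ⁻¹' T) := by
  classical
  intro f hf hfS
  obtain ⟨g, hg, hgT, hgf⟩ := h (fun x => (f x : E)) (continuous_subtype_val.comp_continuousOn hf)
    fun x hx => ⟨hfS hx, (f x).2⟩
  obtain ⟨x₀, hx₀⟩ := hX
  let g' : (Fin j → ℝ) → X := fun x => if hx : g x ∈ X then ⟨g x, hx⟩ else ⟨x₀, hx₀⟩
  have hg' : ∀ x ∈ closedBall (0 : Fin j → ℝ) 1, (g' x : E) = g x := fun x hx => by
    simp only [g', dif_pos (hgT hx).2]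
  refine ⟨g', IsInducing.subtypeVal.continuousOn_iff.2 (hg.congr hg'), fun x hx => ?_,
    fun x hx => ?_⟩
  · show (g' x : E) ∈ T
    rw [hg' x hx]
    exact (hgT hx).1
  · ext1
    rw [hg' x (sphere_subset_closedBall hx), hgf hx]

variable {E : Type*} [NormedAddCommGroup E] [NormedSpace ℝ E] [FiniteDimensional ℝ E]

theorem tendsto_inv_one_add_dist {X : Set E} (hX : IsClosed X) (p : E) :
    Filter.Tendsto (fun x : X => (1 + dist (x : E) p)⁻¹) (Filter.coclosedCompact X) (𝓝 0) := by
  have : ProperSpace E := FiniteDimensional.proper ℝ E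
  rw [Filter.coclosedCompact_eq_cocompact]
  exact (Filter.tendsto_atTop_add_const_left _ _ ((tendsto_dist_right_cocompact_atTop p).comp
    hX.isClosedEmbedding_subtypeVal.tendsto_cocompact)).inv_tendsto_atTop

theorem metrizableSpace_onePoint {X : Set E} (hX : IsClosed X) :
    TopologicalSpace.MetrizableSpace (OnePoint X) := by
  have : ProperSpace E := FiniteDimensional.proper ℝ E
  have : LocallyCompactSpace X := hX.isClosedEmbedding_subtypeVal.locallyCompactSpace
  let e : OnePoint X → ℝ × E := fun y => y.elim (0, 0)
    fun x => ((1 + dist (x : E) 0)⁻¹, ((1 + dist (x : E) 0)⁻¹) ^ 2 • (x : E))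
  have hpos : ∀ x : X, 0 < (1 + dist (x : E) 0)⁻¹ := fun x => by positivity
  have he : Continuous e := by
    rw [OnePoint.continuous_iff]
    constructor
    · have h0 := tendsto_inv_one_add_dist hX (0 : E)
      refine h0.prodMk_nhds (squeeze_zero_norm (fun x => ?_) h0)
      have h1 := hpos x
      rw [norm_smul, Real.norm_of_nonneg (by positivity), sq, mul_assoc]
      refine mul_le_of_le_one_right h1.le ?_
      rw [inv_mul_le_iff₀ (by positivity), dist_zero_right]
      linarith
    · have : Continuous fun x : X => (1 + dist (x : E) 0)⁻¹ :=
        Continuous.inv₀ (by fun_prop) fun x => by positivity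
      exact this.prodMk ((this.pow 2).smul continuous_subtype_val)
  have hinj : Function.Injective e := by
    intro y y' hyy'
    induction y using OnePoint.rec with
    | infty =>
      induction y' using OnePoint.rec with
      | infty => rfl
      | coe x => exact absurd (congrArg Prod.fst hyy') (hpos x).ne
    | coe x =>
      induction y' using OnePoint.rec with
      | infty => exact absurd (congrArg Prod.fst hyy') (hpos x).ne'
      | coe x' =>
        have h1 : (1 + dist (x : E) 0)⁻¹ = (1 + dist (x' : E) 0)⁻¹ := congrArg Prod.fst hyy'
        have h2 : ((1 + dist (x : E) 0)⁻¹) ^ 2 • (x : E) =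
          ((1 + dist (x' : E) 0)⁻¹) ^ 2 • (x' : E) := congrArg Prod.snd hyy'
        rw [h1] at h2
        have := smul_right_injective E (pow_pos (hpos x') 2).ne' h2
        rw [Subtype.ext this]
  exact (he.isClosedEmbedding hinj).isEmbedding.metrizableSpace

/-- If a closed set `X` is locally contractible, and locally the part of `X` outside a sphere around
`p` is highly connected near each point of that sphere, then the one-point compactification of `X`
is highly connected. -/
theorem onePoint_spaceMConnected {X : Set E} (hX : IsClosed X) (p : E) {m : ℕ}
    (H : ∀ x ∈ X, ∀ ε > 0, ∃ δ > 0, ∀ j, SphereExtends j (ball x δ ∩ X) (ball x ε ∩ X))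
    (H' : ∀ x ∈ X, ∀ ε > 0, ∃ δ > 0, ∀ j ≤ m, SphereExtends j
      (ball x δ ∩ {w | dist x p < dist w p} ∩ X) (ball x ε ∩ {w | dist x p < dist w p} ∩ X)) :
    SpaceMConnected m (OnePoint X) := by
  have : ProperSpace E := FiniteDimensional.proper ℝ E
  have : LocallyCompactSpace X := hX.isClosedEmbedding_subtypeVal.locallyCompactSpace
  have := metrizableSpace_onePoint hX
  let : MetricSpace (OnePoint X) := TopologicalSpace.metrizableSpaceMetric _
  let h : OnePoint X → ℝ := fun y => y.elim 0 fun x => -(1 + dist (x : E) p)⁻¹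
  have hcoe : ∀ x : X, h x = -(1 + dist (x : E) p)⁻¹ := fun _ => rfl
  have hh : Continuous h := by
    rw [OnePoint.continuous_iff]
    refine ⟨?_, (Continuous.inv₀ (by fun_prop) fun x => by positivity).neg⟩
    have := (tendsto_inv_one_add_dist hX p).neg
    rwa [neg_zero] at this
  have hlt : ∀ x x' : X, h x < h x' ↔ dist (x : E) p < dist (x' : E) p := fun x x' => by
    rw [hcoe, hcoe, neg_lt_neg_iff, inv_lt_inv₀ (by positivity) (by positivity)]
    simp
  have hz : ∀ y, y ≠ OnePoint.infty → h y < h OnePoint.infty := by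
    intro y hy
    induction y using OnePoint.rec with
    | infty => exact absurd rfl hy
    | coe x =>
      rw [hcoe]
      show _ < (0 : ℝ)
      have : 0 < (1 + dist (x : E) p)⁻¹ := by positivity
      linarith
  have hnhds : ∀ x : X, ∀ W ∈ 𝓝 (x : OnePoint X), ∃ ε > 0,
      ((↑) : X → OnePoint X) '' (Subtype.val ⁻¹' ball (x : E) ε) ⊆ W := by
    intro x W hW
    have h1 : ((↑) : X → OnePoint X) ⁻¹' W ∈ 𝓝 x := OnePoint.continuous_coe.continuousAt hW
    rw [nhds_subtype_eq_comap, Filter.mem_comap] at h1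
    obtain ⟨U, hU, hUW⟩ := h1
    obtain ⟨ε, hε, hεU⟩ := Metric.mem_nhds_iff.1 hU
    exact ⟨ε, hε, image_subset_iff.2 ((preimage_mono hεU).trans hUW)⟩
  have hnhds' : ∀ x : X, ∀ δ > 0,
      ((↑) : X → OnePoint X) '' (Subtype.val ⁻¹' ball (x : E) δ) ∈ 𝓝 (x : OnePoint X) :=
    fun x δ hδ => OnePoint.isOpenEmbedding_coe.image_mem_nhds.2
      (continuous_subtype_val.continuousAt (ball_mem_nhds _ hδ))
  refine spaceMConnected_of_sphereExtends fun k hk => sphereExtends_of_superlevel hh hz ?_ ?_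
  · intro y hy W hW
    induction y using OnePoint.rec with
    | infty => exact absurd rfl hy
    | coe x =>
      have : Nonempty X := ⟨x⟩
      obtain ⟨ε, hε, hεW⟩ := hnhds x W hW
      obtain ⟨δ, hδ, hH⟩ := H x x.2 ε hε
      exact ⟨_, hnhds' x δ hδ, fun j _ => (((hH j).preimage_subtype_val
        ⟨x, x.2⟩).image_isEmbedding OnePoint.isOpenEmbedding_coe.isEmbedding).mono Subset.rfl hεW⟩
  · intro y hy W hW
    induction y using OnePoint.rec with
    | infty => exact absurd rfl hy
    | coe x =>
      have : Nonempty X := ⟨x⟩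
      obtain ⟨ε, hε, hεW⟩ := hnhds x W hW
      obtain ⟨δ, hδ, hH⟩ := H' x x.2 ε hε
      refine ⟨_, hnhds' x δ hδ, fun j hj => (((hH j (hj.trans hk)).preimage_subtype_val
        ⟨x, x.2⟩).image_isEmbedding OnePoint.isOpenEmbedding_coe.isEmbedding).mono ?_ ?_⟩
      · rintro _ ⟨⟨w, hw, rfl⟩, hw'⟩
        exact ⟨w, ⟨hw, (hlt x w).1 hw'⟩, rfl⟩
      · rintro _ ⟨w, ⟨hw, hw'⟩, rfl⟩
        exact ⟨hεW ⟨w, hw, rfl⟩, (hlt x w).2 hw'⟩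

end Compactification

section Extension

/-- A map on the sphere which is homotopic in `B` to a map extending over the ball into `B` extends
over the ball into `B`. -/
theorem exists_extension_of_homotopy {Y : Type*} [TopologicalSpace Y] {j : ℕ} {B : Set Y}
    {f : (Fin j → ℝ) → Y} (F : ℝ × (Fin j → ℝ) → Y)
    (hF : ContinuousOn F (Icc 0 1 ×ˢ sphere 0 1)) (hFB : MapsTo F (Icc 0 1 ×ˢ sphere 0 1) B)
    (hF0 : ∀ x ∈ sphere (0 : Fin j → ℝ) 1, F (0, x) = f x)
    {g₁ : (Fin j → ℝ) → Y} (hg₁ : ContinuousOn g₁ (closedBall 0 1))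
    (hg₁B : MapsTo g₁ (closedBall 0 1) B) (hF1 : ∀ x ∈ sphere (0 : Fin j → ℝ) 1, F (1, x) = g₁ x) :
    ∃ g : (Fin j → ℝ) → Y, ContinuousOn g (closedBall 0 1) ∧ MapsTo g (closedBall 0 1) B ∧
      EqOn g f (sphere 0 1) := by
  classical
  let g : (Fin j → ℝ) → Y := fun x =>
    if ‖x‖ ≤ 1 / 2 then g₁ ((2 : ℝ) • x) else F (2 - 2 * ‖x‖, ‖x‖⁻¹ • x)
  let C₁ : Set (Fin j → ℝ) := {x | ‖x‖ ≤ 1 / 2}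
  let C₂ : Set (Fin j → ℝ) := {x | 1 / 2 ≤ ‖x‖ ∧ ‖x‖ ≤ 1}
  have hC₁ : IsClosed C₁ := isClosed_le continuous_norm continuous_const
  have hC₂ : IsClosed C₂ := (isClosed_le continuous_const continuous_norm).inter
    (isClosed_le continuous_norm continuous_const)
  have m₁ : MapsTo (fun x : Fin j → ℝ => (2 : ℝ) • x) C₁ (closedBall 0 1) := by
    intro x hx
    have : ‖x‖ ≤ 1 / 2 := hx
    rw [mem_closedBall_zero_iff, norm_smul, Real.norm_ofNat]
    linarith
  have m₂ : MapsTo (fun x : Fin j → ℝ => ((2 - 2 * ‖x‖ : ℝ), ‖x‖⁻¹ • x)) C₂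
      (Icc 0 1 ×ˢ sphere 0 1) := by
    intro x hx
    obtain ⟨h1, h2⟩ : 1 / 2 ≤ ‖x‖ ∧ ‖x‖ ≤ 1 := hx
    refine ⟨⟨by dsimp only; linarith, by dsimp only; linarith⟩, ?_⟩
    simp only [mem_sphere_zero_iff_norm, norm_smul, norm_inv, norm_norm]
    exact inv_mul_cancel₀ (by linarith)
  have e₁ : EqOn g (fun x => g₁ ((2 : ℝ) • x)) C₁ := fun x hx => if_pos hx
  have e₂ : EqOn g (fun x => F (2 - 2 * ‖x‖, ‖x‖⁻¹ • x)) C₂ := by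
    intro x hx
    by_cases h : ‖x‖ ≤ 1 / 2
    · have h' : ‖x‖ = 1 / 2 := le_antisymm h hx.1
      have hs : (2 : ℝ) • x ∈ sphere (0 : Fin j → ℝ) 1 := by
        rw [mem_sphere_zero_iff_norm, norm_smul, Real.norm_ofNat, h']; norm_num
      simp only [g, if_pos h, h']
      rw [← hF1 _ hs]
      norm_num
    · exact if_neg h
  have hcov : closedBall (0 : Fin j → ℝ) 1 ⊆ C₁ ∪ C₂ := by
    intro x hx
    rw [mem_closedBall_zero_iff] at hx
    rcases le_total ‖x‖ (1 / 2) with h | h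
    · exact Or.inl h
    · exact Or.inr ⟨h, hx⟩
  refine ⟨g, ?_, ?_, ?_⟩
  · refine ContinuousOn.mono (ContinuousOn.union_of_isClosed ?_ ?_ hC₁ hC₂) hcov
    · exact (hg₁.comp (by fun_prop) m₁).congr e₁
    · refine (hF.comp ?_ m₂).congr e₂
      refine ContinuousOn.prodMk (by fun_prop) (ContinuousOn.smul (ContinuousOn.inv₀
        continuous_norm.continuousOn fun x hx => ?_) continuousOn_id)
      have : 1 / 2 ≤ ‖x‖ := hx.1
      linarith
  · intro x hx
    rcases hcov hx with h | h
    · rw [e₁ h]; exact hg₁B (m₁ h)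
    · rw [e₂ h]; exact hFB (m₂ h)
  · intro x hx
    have hx' : ‖x‖ = 1 := by simpa using hx
    have : x ∈ C₂ := ⟨by rw [hx']; norm_num, hx'.le⟩
    rw [e₂ this, ← hF0 x hx]
    simp [hx']

/-- Deforming `A` within `B` into a set `A'`, sphere extension from `A'` gives sphere extension
from `A`. -/
theorem SphereExtends.of_deformation {Y : Type*} [TopologicalSpace Y] {j : ℕ} {A A' B : Set Y}
    (h : SphereExtends j A' B) (K : ℝ × Y → Y) (hK : ContinuousOn K (Icc 0 1 ×ˢ A))
    (hKB : MapsTo K (Icc 0 1 ×ˢ A) B) (hK0 : ∀ v ∈ A, K (0, v) = v)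
    (hK1 : ∀ v ∈ A, K (1, v) ∈ A') : SphereExtends j A B := by
  intro f hf hfA
  have m : MapsTo (fun q : ℝ × (Fin j → ℝ) => (q.1, f q.2)) (Icc 0 1 ×ˢ sphere 0 1)
      (Icc 0 1 ×ˢ A) := fun q hq => ⟨hq.1, hfA hq.2⟩
  have c : ContinuousOn (fun q : ℝ × (Fin j → ℝ) => (q.1, f q.2)) (Icc 0 1 ×ˢ sphere 0 1) :=
    ContinuousOn.prodMk (by fun_prop) (hf.comp (by fun_prop) fun q hq => hq.2)
  have one : (1 : ℝ) ∈ Icc (0 : ℝ) 1 := ⟨zero_le_one, le_rfl⟩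
  obtain ⟨g₁, hg₁, hg₁B, hg₁f⟩ := h (fun x => K (1, f x))
    (hK.comp (ContinuousOn.prodMk continuousOn_const hf) fun x hx => ⟨one, hfA hx⟩)
    fun x hx => hK1 _ (hfA hx)
  exact exists_extension_of_homotopy (fun q => K (q.1, f q.2)) (hK.comp c m) (hKB.comp m)
    (fun x hx => hK0 _ (hfA hx)) hg₁ hg₁B fun x hx => (hg₁f hx).symm

theorem sphereExtends_singleton {Y : Type*} [TopologicalSpace Y] (j : ℕ) {B : Set Y} {y : Y}
    (hy : y ∈ B) : SphereExtends j {y} B := fun _ _ hf =>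
  ⟨fun _ => y, continuousOn_const, fun _ _ => hy, fun _ hx => (hf hx).symm⟩

/-- Spheres of low dimension can be filled in the complement of the origin. -/
theorem sphereExtends_compl_zero {W : Type*} [NormedAddCommGroup W] [NormedSpace ℝ W]
    [FiniteDimensional ℝ W] {j : ℕ} (hj : j < Module.finrank ℝ W) :
    SphereExtends j ({0}ᶜ : Set W) {0}ᶜ := by
  intro f hf hf0
  have hcpt : IsCompact (sphere (0 : Fin j → ℝ) 1) := isCompact_sphere 0 1
  obtain ⟨μ, hμ, hfμ⟩ : ∃ μ > 0, ∀ x ∈ sphere (0 : Fin j → ℝ) 1, μ ≤ ‖f x‖ := by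
    rcases (sphere (0 : Fin j → ℝ) 1).eq_empty_or_nonempty with h | h
    · exact ⟨1, one_pos, by simp [h]⟩
    · obtain ⟨x, hx, hmin⟩ := hcpt.exists_isMinOn h hf.norm
      exact ⟨‖f x‖, norm_pos_iff.2 (hf0 hx), fun y hy => hmin hy⟩
  have hT : TietzeExtension.{0} W := TietzeExtension.of_tvs ℝ
  obtain ⟨G, hG⟩ := ContinuousMap.exists_restrict_eq hcpt.isClosed
    ⟨_, continuousOn_iff_continuous_domRestrict.1 hf⟩
  have hGf : ∀ x ∈ sphere (0 : Fin j → ℝ) 1, G x = f x := fun x hx =>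
    congrArg (fun c => c ⟨x, hx⟩) hG
  obtain ⟨P, hP, hPG, -⟩ := G.continuous.exists_contDiff_approx 1 (continuous_const (y := μ / 2))
    (fun _ => half_pos hμ)
  have hP1 : ContDiff ℝ 1 P := by simpa using hP
  have hdense := hP1.dense_compl_range_of_finrank_lt_finrank (by simpa using hj)
  obtain ⟨q, hq, hqμ⟩ := hdense.exists_dist_lt 0 (half_pos hμ)
  rw [dist_comm, dist_zero_right] at hqμ
  refine exists_extension_of_homotopy (g₁ := fun x => P x - q)
    (fun z => f z.2 + z.1 • (P z.2 - q - f z.2)) ?_ ?_ (fun x hx => by simp)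
    (hP.continuous.continuousOn.sub continuousOn_const) ?_ (fun x hx => by simp)
  · have h2 : ContinuousOn (fun z : ℝ × (Fin j → ℝ) => f z.2) (Icc 0 1 ×ˢ sphere 0 1) :=
      hf.comp (by fun_prop) fun z hz => hz.2
    have h3 : Continuous (fun z : ℝ × (Fin j → ℝ) => P z.2) := hP.continuous.comp continuous_snd
    exact h2.add (continuousOn_fst.smul ((h3.continuousOn.sub continuousOn_const).sub h2))
  · rintro ⟨s, x⟩ ⟨⟨hs0, hs1⟩, hx⟩ h0
    have h0 : f x + s • (P x - q - f x) = 0 := h0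
    have h1 : ‖P x - f x‖ < μ / 2 := by rw [← hGf x hx, ← dist_eq_norm]; exact hPG x
    have h2 : ‖P x - q - f x‖ < μ := by
      calc ‖P x - q - f x‖ = ‖(P x - f x) - q‖ := by congr 1; abel
        _ ≤ ‖P x - f x‖ + ‖q‖ := norm_sub_le _ _
        _ < μ := by linarith
    have h3 : ‖f x‖ = s * ‖P x - q - f x‖ := by
      have := congrArg norm (eq_neg_of_add_eq_zero_left h0)
      rwa [norm_neg, norm_smul, Real.norm_of_nonneg hs0] at this
    have := hfμ x hx
    nlinarith [norm_nonneg (P x - q - f x)]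
  · intro x _ h0
    exact hq ⟨x, sub_eq_zero.1 h0⟩

end Extension

section LinearLocus

variable {V : Type*} [NormedAddCommGroup V] [InnerProductSpace ℝ V]
  {J : Type*} {I : J → Type*}

/-- The intersection, over the colours `j`, of the loci where the maximum of the linear functionals
of colour `j` is attained at least twice. -/
def linLocus (ℓ : ∀ j, I j → V →L[ℝ] ℝ) : Set V :=
  {v | ∀ j, ∃ i i', i ≠ i' ∧ (∀ k, ℓ j k v ≤ ℓ j i v) ∧ ∀ k, ℓ j k v ≤ ℓ j i' v}

variable [∀ j, Fintype (I j)] [∀ j, Nonempty (I j)] {ℓ : ∀ j, I j → V →L[ℝ] ℝ}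

/-- The difference between the maximum of the functionals of one colour and a given one. -/
noncomputable def gap (ℓ : ∀ j, I j → V →L[ℝ] ℝ) (p : Σ j, I j) (v : V) : ℝ :=
  Finset.univ.sup' Finset.univ_nonempty (fun i => ℓ p.1 i v) - ℓ p.1 p.2 v

theorem continuous_gap (p : Σ j, I j) : Continuous (gap ℓ p) :=
  (Continuous.finset_sup'_apply _ fun i _ => (ℓ p.1 i).continuous).sub (ℓ p.1 p.2).continuous

theorem gap_nonneg (p : Σ j, I j) (v : V) : 0 ≤ gap ℓ p v :=
  sub_nonneg.2 (Finset.le_sup' (fun i => ℓ p.1 i v) (Finset.mem_univ p.2))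

theorem gap_eq_of_isMax {j : J} {i₀ : I j} {v : V} (h : ∀ k, ℓ j k v ≤ ℓ j i₀ v) (i : I j) :
    gap ℓ ⟨j, i⟩ v = ℓ j i₀ v - ℓ j i v := by
  unfold gap
  congr 1
  exact le_antisymm (Finset.sup'_le _ _ fun k _ => h k)
    (Finset.le_sup' (fun i => ℓ j i v) (Finset.mem_univ i₀))

theorem exists_isMax (j : J) (v : V) : ∃ i₀, ∀ k, ℓ j k v ≤ ℓ j i₀ v :=
  Finite.exists_max fun i => ℓ j i v

theorem gap_eq_zero_iff {j : J} {i : I j} {v : V} :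
    gap ℓ ⟨j, i⟩ v = 0 ↔ ∀ k, ℓ j k v ≤ ℓ j i v := by
  constructor
  · intro h k
    have h1 := gap_nonneg (ℓ := ℓ) ⟨j, k⟩ v
    unfold gap at h h1
    dsimp only at h h1
    linarith
  · intro h
    rw [gap_eq_of_isMax h, sub_self]

theorem mem_linLocus_iff {v : V} :
    v ∈ linLocus ℓ ↔ ∀ j, ∃ i i', i ≠ i' ∧ gap ℓ ⟨j, i⟩ v = 0 ∧ gap ℓ ⟨j, i'⟩ v = 0 := by
  simp only [gap_eq_zero_iff, linLocus, mem_ofPred_eq]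

theorem gap_smul (p : Σ j, I j) {s : ℝ} (hs : 0 ≤ s) (v : V) : gap ℓ p (s • v) = s * gap ℓ p v := by
  obtain ⟨j, i⟩ := p
  obtain ⟨i₀, h⟩ := exists_isMax (ℓ := ℓ) j v
  rw [gap_eq_of_isMax h, gap_eq_of_isMax (i₀ := i₀)]
  · simp [mul_sub]
  · intro k
    simpa using mul_le_mul_of_nonneg_left (h k) hs

theorem gap_add {j : J} {v w : V} {t : I j → ℝ} {κ : ℝ} (hw : ∀ i, ℓ j i w = -t i + κ)
    (hnn : ∀ i, 0 ≤ gap ℓ ⟨j, i⟩ v + t i) (hz : ∃ i, gap ℓ ⟨j, i⟩ v + t i = 0) (i : I j) :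
    gap ℓ ⟨j, i⟩ (v + w) = gap ℓ ⟨j, i⟩ v + t i := by
  obtain ⟨i₁, h₁⟩ := hz
  obtain ⟨i₀, h₀⟩ := exists_isMax (ℓ := ℓ) j v
  have e : ∀ i, gap ℓ ⟨j, i⟩ v = ℓ j i₀ v - ℓ j i v := gap_eq_of_isMax h₀
  rw [gap_eq_of_isMax (i₀ := i₁)]
  · simp only [map_add, hw]
    linarith [e i, e i₁]
  · intro k
    simp only [map_add, hw]
    linarith [e k, e i₁, hnn k]

theorem gap_add_of_const {j : J} {v w : V} {κ : ℝ} (hw : ∀ i, ℓ j i w = κ) (i : I j) :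
    gap ℓ ⟨j, i⟩ (v + w) = gap ℓ ⟨j, i⟩ v := by
  obtain ⟨i₀, h₀⟩ := exists_isMax (ℓ := ℓ) j v
  simpa using gap_add (t := fun _ => 0) (κ := κ) (v := v) (by simpa using hw)
    (fun i => by simpa using gap_nonneg (ℓ := ℓ) ⟨j, i⟩ v)
    ⟨i₀, by simpa using gap_eq_zero_iff.2 h₀⟩ i

theorem smul_mem_linLocus {v : V} (hv : v ∈ linLocus ℓ) {s : ℝ} (hs : 0 ≤ s) :
    s • v ∈ linLocus ℓ := by
  rw [mem_linLocus_iff] at hv ⊢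
  intro j
  obtain ⟨i, i', hne, h, h'⟩ := hv j
  exact ⟨i, i', hne, by rw [gap_smul _ hs, h, mul_zero], by rw [gap_smul _ hs, h', mul_zero]⟩

theorem zero_mem_linLocus [∀ j, Nontrivial (I j)] : (0 : V) ∈ linLocus ℓ := by
  intro j
  obtain ⟨i, i', h⟩ := exists_pair_ne (I j)
  exact ⟨i, i', h, by simp, by simp⟩

theorem exists_gap_le (ℓ : ∀ j, I j → V →L[ℝ] ℝ) [Finite J] :
    ∃ C, 0 ≤ C ∧ ∀ p v, gap ℓ p v ≤ C * ‖v‖ := by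
  have := Fintype.ofFinite J
  refine ⟨∑ q : Σ j, I j, 2 * ‖ℓ q.1 q.2‖, by positivity, ?_⟩
  rintro ⟨j, i⟩ v
  obtain ⟨i₀, h⟩ := exists_isMax (ℓ := ℓ) j v
  have hle : ∀ i, ‖ℓ j i‖ ≤ (∑ q : Σ j, I j, 2 * ‖ℓ q.1 q.2‖) / 2 := fun i => by
    have := Finset.single_le_sum (f := fun q : Σ j, I j => 2 * ‖ℓ q.1 q.2‖)
      (fun q _ => by positivity) (Finset.mem_univ ⟨j, i⟩)
    dsimp only at this
    linarith
  have hb : ∀ i, |ℓ j i v| ≤ (∑ q : Σ j, I j, 2 * ‖ℓ q.1 q.2‖) / 2 * ‖v‖ := fun i =>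
    ((ℓ j i).le_opNorm v).trans (mul_le_mul_of_nonneg_right (hle i) (norm_nonneg v))
  rw [gap_eq_of_isMax h]
  have h1 := (abs_le.1 (hb i₀)).2
  have h2 := (abs_le.1 (hb i)).1
  linarith

/-- The linear locus is star-shaped about the origin, hence locally contractible there. -/
theorem sphereExtends_linLocus [∀ j, Nontrivial (I j)] {ε : ℝ} (hε : 0 < ε) (j : ℕ) :
    SphereExtends j (ball 0 ε ∩ linLocus ℓ) (ball 0 ε ∩ linLocus ℓ) := by
  refine SphereExtends.of_deformation (A' := {0}) (sphereExtends_singleton j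
    ⟨mem_ball_self hε, zero_mem_linLocus⟩) (fun q => (1 - q.1) • q.2) (by fun_prop) ?_
    (by simp) (by simp)
  rintro ⟨s, v⟩ ⟨⟨hs0, hs1⟩, hv, hvT⟩
  refine ⟨?_, smul_mem_linLocus hvT (sub_nonneg.2 hs1)⟩
  rw [mem_ball_zero_iff] at hv ⊢
  rw [norm_smul, Real.norm_of_nonneg (sub_nonneg.2 hs1)]
  nlinarith [norm_nonneg v]

/-- The side of a sphere through the origin on which the squared distance increases. -/
def outside (lam : V →L[ℝ] ℝ) : Set V := {v | 0 < 2 * lam v + ‖v‖ ^ 2}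

/-- Contraction along a direction in which the functional increases. -/
theorem exists_sphereExtends_of_direction {T T' : Set V} {lam : V →L[ℝ] ℝ} {u : V}
    (h0 : (0 : V) ∈ T') (hT' : ∀ v ∈ T', ∀ s : ℝ, 0 ≤ s → s • v ∈ T')
    (hu : ∀ v ∈ T', ∀ t : ℝ, 0 ≤ t → v + t • u ∈ T) (hlam : 0 < lam u) {ε : ℝ} (hε : 0 < ε) :
    ∃ δ > 0, ∀ j, SphereExtends j (ball 0 δ ∩ T' ∩ outside lam) (ball 0 ε ∩ T ∩ outside lam) := by
  have hu0 := norm_nonneg u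
  let τ := ε / (2 * (‖u‖ + 1))
  have hτ : 0 < τ := by positivity
  have hτu : τ * ‖u‖ < ε / 2 := by
    have : τ * (‖u‖ + 1) = ε / 2 := by simp only [τ]; field_simp
    nlinarith
  let δ := min (min 1 (ε / 2)) (τ * lam u / (1 + 2 * τ * ‖u‖))
  have hδ : 0 < δ := by positivity
  have hδ1 : δ ≤ 1 := (min_le_left _ _).trans (min_le_left _ _)
  have hδε : δ ≤ ε / 2 := (min_le_left _ _).trans (min_le_right _ _)
  have hδ2 : δ * (1 + 2 * τ * ‖u‖) ≤ τ * lam u :=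
    (le_div_iff₀ (by positivity)).1 (min_le_right _ _)
  have key : ∀ s ∈ Icc (0 : ℝ) 1, ∀ v : V, ‖v‖ < δ → (s = 1 ∨ v ∈ outside lam) →
      (1 - s) • v + (s * τ) • u ∈ ball (0 : V) ε ∩ outside lam := by
    rintro s ⟨hs0, hs1⟩ v hv hout
    constructor
    · rw [mem_ball_zero_iff]
      calc ‖(1 - s) • v + (s * τ) • u‖ ≤ ‖(1 - s) • v‖ + ‖(s * τ) • u‖ := norm_add_le _ _
        _ = (1 - s) * ‖v‖ + s * (τ * ‖u‖) := by
          rw [norm_smul, norm_smul, Real.norm_of_nonneg (sub_nonneg.2 hs1),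
            Real.norm_of_nonneg (by positivity)]
          ring
        _ < ε := by nlinarith [norm_nonneg v]
    · change 0 < 2 * lam ((1 - s) • v + (s * τ) • u) + ‖(1 - s) • v + (s * τ) • u‖ ^ 2
      have hin : -(‖v‖ * ‖u‖) ≤ inner ℝ v u := (abs_le.1 (abs_real_inner_le_norm v u)).1
      have hvn := norm_nonneg v
      have e : ‖(1 - s) • v + (s * τ) • u‖ ^ 2 = (1 - s) ^ 2 * ‖v‖ ^ 2
          + 2 * ((1 - s) * (s * τ)) * inner ℝ v u + (s * τ) ^ 2 * ‖u‖ ^ 2 := by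
        rw [norm_add_sq_real, norm_smul, norm_smul, inner_smul_left, inner_smul_right, mul_pow,
          mul_pow, Real.norm_eq_abs, Real.norm_eq_abs, sq_abs, sq_abs]
        simp only [conj_trivial]
        ring
      rw [e]
      simp only [map_add, map_smul, smul_eq_mul]
      have hv2 : ‖v‖ ^ 2 ≤ δ := by nlinarith
      have hvu : ‖v‖ * ‖u‖ ≤ δ * ‖u‖ := mul_le_mul_of_nonneg_right hv.le hu0
      have hcoef : 0 ≤ (1 - s) * (s * τ) := mul_nonneg (sub_nonneg.2 hs1) (by positivity)
      have h1 : -(2 * ((1 - s) * (s * τ)) * (δ * ‖u‖)) ≤ 2 * ((1 - s) * (s * τ)) * inner ℝ v u := by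
        nlinarith
      have h2 : 2 * ((1 - s) * (s * τ)) * (δ * ‖u‖) ≤ 2 * (s * τ) * (δ * ‖u‖) := by
        have : 0 ≤ s * τ * (δ * ‖u‖) := by positivity
        nlinarith
      have h3 : s * (δ * (1 + 2 * τ * ‖u‖)) ≤ s * (τ * lam u) := mul_le_mul_of_nonneg_left hδ2 hs0
      have h4 : 0 ≤ (s * τ) ^ 2 * ‖u‖ ^ 2 := by positivity
      have h7 : (1 - s) * s * ‖v‖ ^ 2 ≤ s * δ := by
        have : (1 - s) * s ≤ s := by nlinarith
        nlinarith [sq_nonneg ‖v‖, mul_nonneg hs0 hδ.le, mul_nonneg (sub_nonneg.2 hs1) hs0]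
      rcases hs0.eq_or_lt with rfl | hspos
      · rcases hout with h | h
        · norm_num at h
        · have : 0 < 2 * lam v + ‖v‖ ^ 2 := h
          simpa using this
      · have h5 : 0 < s * (τ * lam u) := by positivity
        have h6 : 0 ≤ (1 - s) * (2 * lam v + ‖v‖ ^ 2) := by
          rcases hout with h | h
          · simp [h]
          · exact mul_nonneg (sub_nonneg.2 hs1) (le_of_lt h)
        nlinarith
  refine ⟨δ, hδ, fun j => ?_⟩
  refine SphereExtends.of_deformation (A' := {τ • u}) (sphereExtends_singleton j ?_)
    (fun q => (1 - q.1) • q.2 + (q.1 * τ) • u) (by fun_prop) ?_ (by simp) (by simp)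
  · have h := key 1 ⟨zero_le_one, le_rfl⟩ 0 (by simpa using hδ) (Or.inl rfl)
    simp only [smul_zero, zero_add, one_mul] at h
    exact ⟨⟨h.1, by simpa using hu 0 h0 τ hτ.le⟩, h.2⟩
  · rintro ⟨s, v⟩ ⟨hs, ⟨hv, hvT⟩, hvo⟩
    rw [mem_ball_zero_iff] at hv
    have h := key s hs v hv (Or.inr hvo)
    exact ⟨⟨h.1, hu _ (hT' v hvT _ (sub_nonneg.2 hs.2)) _ (mul_nonneg hs.1 hτ.le)⟩, h.2⟩

end LinearLocus

section LinearLocus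

variable {V : Type*} [NormedAddCommGroup V] [InnerProductSpace ℝ V]
  {J : Type*} [Fintype J] {I : J → Type*} [∀ j, Fintype (I j)]

/-- The vectors `u` are dual to the functionals `-ℓ`, up to additive constants for each colour. -/
def IsDualSystem (ℓ : ∀ j, I j → V →L[ℝ] ℝ) (u : (Σ j, I j) → V) : Prop :=
  ∀ t : (Σ j, I j) → ℝ, ∀ j, ∃ κ : ℝ, ∀ i, ℓ j i (∑ p, t p • u p) = -t ⟨j, i⟩ + κ

theorem exists_isDualSystem {ℓ : ∀ j, I j → V →L[ℝ] ℝ}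
    (h : ∀ c : ∀ j, I j → ℝ, ∃ v, ∃ κ : J → ℝ, ∀ j i, ℓ j i v = c j i + κ j) :
    ∃ u, IsDualSystem ℓ u := by
  classical
  choose u κ hu using fun p : Σ j, I j =>
    h fun j i => if (⟨j, i⟩ : Σ j, I j) = p then -1 else 0
  refine ⟨u, fun t j => ⟨∑ p, t p * κ p j, fun i => ?_⟩⟩
  simp only [map_sum, map_smul, smul_eq_mul, hu, mul_add, Finset.sum_add_distrib]
  simp

variable [∀ j, Nonempty (I j)] {ℓ : ∀ j, I j → V →L[ℝ] ℝ} {u : (Σ j, I j) → V}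
  {lam : V →L[ℝ] ℝ}

theorem IsDualSystem.gap_add (hu : IsDualSystem ℓ u) (t : (Σ j, I j) → ℝ) {v : V}
    (hnn : ∀ p, 0 ≤ gap ℓ p v + t p) (hz : ∀ j, ∃ i, gap ℓ ⟨j, i⟩ v + t ⟨j, i⟩ = 0)
    (p : Σ j, I j) : gap ℓ p (v + ∑ p, t p • u p) = gap ℓ p v + t p := by
  obtain ⟨j, i⟩ := p
  obtain ⟨κ, hκ⟩ := hu t j
  exact _root_.gap_add (t := fun i => t ⟨j, i⟩) hκ (fun i => hnn _) (hz j) i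

theorem IsDualSystem.apply_eq_sum (hu : IsDualSystem ℓ u)
    (hL : ∀ v, (∀ j i i', ℓ j i v = ℓ j i' v) → lam v = 0) (v : V) :
    lam v = ∑ p, gap ℓ p v * lam (u p) := by
  have h := hL (v - ∑ p, gap ℓ p v • u p) fun j i i' => by
    obtain ⟨κ, hκ⟩ := hu (fun p => gap ℓ p v) j
    simp only [map_sub, hκ]
    unfold gap
    ring
  simpa [sub_eq_zero] using h

/-- Functionals of negative derivative can be made active without leaving the locus. -/
theorem IsDualSystem.sphereExtends_of_neg (hu : IsDualSystem ℓ u) {ε δ' : ℝ} (hε : 0 < ε)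
    (hδ' : 0 < δ') : ∃ δ > 0, ∀ j,
      SphereExtends j (ball 0 δ' ∩ {v ∈ linLocus ℓ | ∀ p, lam (u p) < 0 → gap ℓ p v = 0}
        ∩ outside lam) (ball 0 ε ∩ linLocus ℓ ∩ outside lam) →
      SphereExtends j (ball 0 δ ∩ linLocus ℓ ∩ outside lam)
        (ball 0 ε ∩ linLocus ℓ ∩ outside lam) := by
  classical
  obtain ⟨C, hC0, hC⟩ := exists_gap_le ℓ
  let K := ∑ p, C * ‖u p‖
  have hK : 0 ≤ K := by positivity
  obtain ⟨η, hη, hηu⟩ : ∃ η > 0, ∀ p, lam (u p) < 0 → η * ‖u p‖ ≤ -lam (u p) := by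
    have : ∀ᶠ η in 𝓝[>] (0 : ℝ), ∀ p, lam (u p) < 0 → η * ‖u p‖ ≤ -lam (u p) := by
      rw [Filter.eventually_all]
      intro p
      by_cases hp : lam (u p) < 0
      · have h : Filter.Tendsto (fun η : ℝ => η * ‖u p‖) (𝓝 0) (𝓝 (0 * ‖u p‖)) :=
          (continuous_id.mul continuous_const).tendsto 0
        rw [zero_mul] at h
        exact nhdsWithin_le_nhds ((h.eventually_le_const (neg_pos.2 hp)).mono fun η h _ => h)
      · exact Filter.Eventually.of_forall fun η h => absurd h hp
    obtain ⟨η, h1, h2⟩ := (this.and self_mem_nhdsWithin).exists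
    exact ⟨η, h2, h1⟩
  let δ := min η (min δ' ε / (1 + K))
  have hδ : 0 < δ := by positivity
  have hδη : δ ≤ η := min_le_left _ _
  have hδ2 : δ * (1 + K) ≤ min δ' ε := (le_div_iff₀ (by positivity)).1 (min_le_right _ _)
  let t : ℝ → V → (Σ j, I j) → ℝ := fun s v p => if lam (u p) < 0 then -(s * gap ℓ p v) else 0
  let k : ℝ × V → V := fun q => q.2 + ∑ p, t q.1 q.2 p • u p
  have hgap : ∀ s ∈ Icc (0 : ℝ) 1, ∀ v ∈ linLocus ℓ, ∀ p,
      gap ℓ p (k (s, v)) = gap ℓ p v + t s v p := by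
    rintro s ⟨hs0, hs1⟩ v hv p
    refine hu.gap_add _ (fun p => ?_) (fun j => ?_) p
    · have := gap_nonneg (ℓ := ℓ) p v
      simp only [t]
      split_ifs <;> nlinarith
    · obtain ⟨i, -, -, h, -⟩ := mem_linLocus_iff.1 hv j
      exact ⟨i, by simp [t, h]⟩
  have hmem : ∀ s ∈ Icc (0 : ℝ) 1, ∀ v ∈ linLocus ℓ, k (s, v) ∈ linLocus ℓ := by
    intro s hs v hv
    rw [mem_linLocus_iff]
    intro j
    obtain ⟨i, i', hne, h, h'⟩ := mem_linLocus_iff.1 hv j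
    refine ⟨i, i', hne, ?_, ?_⟩ <;> rw [hgap s hs v hv] <;> simp [t, h, h']
  have hnorm : ∀ s ∈ Icc (0 : ℝ) 1, ∀ v ∈ ball (0 : V) δ, ‖k (s, v)‖ < min δ' ε := by
    rintro s ⟨hs0, hs1⟩ v hv
    rw [mem_ball_zero_iff] at hv
    refine lt_of_lt_of_le ?_ hδ2
    have h1 : ‖∑ p, t s v p • u p‖ ≤ K * ‖v‖ := by
      rw [Finset.sum_mul]
      refine norm_sum_le_of_le _ fun p _ => ?_
      rw [norm_smul]
      have h2 : ‖t s v p‖ ≤ C * ‖v‖ := by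
        have h3 := gap_nonneg (ℓ := ℓ) p v
        have h4 := hC p v
        simp only [t]
        split_ifs
        · rw [norm_neg, Real.norm_of_nonneg (mul_nonneg hs0 h3)]
          nlinarith
        · rw [norm_zero]; positivity
      calc ‖t s v p‖ * ‖u p‖ ≤ C * ‖v‖ * ‖u p‖ := mul_le_mul_of_nonneg_right h2 (norm_nonneg _)
        _ = C * ‖u p‖ * ‖v‖ := by ring
    calc ‖k (s, v)‖ ≤ ‖v‖ + ‖∑ p, t s v p • u p‖ := norm_add_le _ _
      _ ≤ ‖v‖ * (1 + K) := by linarith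
      _ < δ * (1 + K) := mul_lt_mul_of_pos_right hv (by positivity)
  have hout : ∀ s ∈ Icc (0 : ℝ) 1, ∀ v ∈ ball (0 : V) δ, v ∈ outside lam →
      k (s, v) ∈ outside lam := by
    rintro s ⟨hs0, hs1⟩ v hv hvo
    rw [mem_ball_zero_iff] at hv
    have hvo' : 0 < 2 * lam v + ‖v‖ ^ 2 := hvo
    refine lt_of_lt_of_le hvo' ?_
    have h1 : 0 ≤ lam (∑ p, t s v p • u p) + inner ℝ v (∑ p, t s v p • u p) := by
      rw [map_sum, inner_sum, ← Finset.sum_add_distrib]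
      refine Finset.sum_nonneg fun p _ => ?_
      rw [map_smul, inner_smul_right, smul_eq_mul, ← mul_add]
      by_cases hp : lam (u p) < 0
      · simp only [t, if_pos hp]
        have h2 := (abs_le.1 (abs_real_inner_le_norm v (u p))).2
        have h3 : ‖v‖ * ‖u p‖ ≤ η * ‖u p‖ :=
          mul_le_mul_of_nonneg_right (hv.le.trans hδη) (norm_nonneg _)
        have h4 := hηu p hp
        have h5 := mul_nonneg hs0 (gap_nonneg (ℓ := ℓ) p v)
        nlinarith
      · simp [t, hp]
    change _ ≤ 2 * lam (v + ∑ p, t s v p • u p) + ‖v + ∑ p, t s v p • u p‖ ^ 2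
    rw [norm_add_sq_real, map_add]
    nlinarith [sq_nonneg ‖∑ p, t s v p • u p‖]
  have hcont : Continuous k := by
    refine continuous_snd.add (continuous_finsetSum _ fun p _ => ?_)
    refine Continuous.smul ?_ continuous_const
    simp only [t]
    split_ifs
    · exact (continuous_fst.mul ((continuous_gap p).comp continuous_snd)).neg
    · exact continuous_const
  refine ⟨δ, hδ, fun j hj => hj.of_deformation k hcont.continuousOn ?_ ?_ ?_⟩
  · rintro ⟨s, v⟩ ⟨hs, ⟨hv, hvT⟩, hvo⟩
    exact ⟨⟨mem_ball_zero_iff.2 ((hnorm s hs v hv).trans_le (min_le_right _ _)),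
      hmem s hs v hvT⟩, hout s hs v hv hvo⟩
  · intro v _
    simp [k, t]
  · rintro v ⟨⟨hv, hvT⟩, hvo⟩
    have one : (1 : ℝ) ∈ Icc (0 : ℝ) 1 := ⟨zero_le_one, le_rfl⟩
    refine ⟨⟨mem_ball_zero_iff.2 ((hnorm 1 one v hv).trans_le (min_le_left _ _)),
      hmem 1 one v hvT, fun p hp => ?_⟩, hout 1 one v hv hvo⟩
    rw [hgap 1 one v hvT]
    simp [t, hp]

end LinearLocus

section LinearLocus

variable {V : Type*} [NormedAddCommGroup V] [InnerProductSpace ℝ V] [FiniteDimensional ℝ V]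
  {J : Type*} [Fintype J] {I : J → Type*} [∀ j, Fintype (I j)] [∀ j, Nontrivial (I j)]
  {ℓ : ∀ j, I j → V →L[ℝ] ℝ} {u : (Σ j, I j) → V} {lam : V →L[ℝ] ℝ}

/-- If a single functional of each colour has negative derivative, the locus on which these are
active is the image of a linear space under a retraction. -/
theorem IsDualSystem.sphereExtends_of_unique_neg (hu : IsDualSystem ℓ u)
    (hL : ∀ v, (∀ j i i', ℓ j i v = ℓ j i' v) → lam v = 0) {neg : ∀ j, I j}
    (hneg : ∀ j i, lam (u ⟨j, i⟩) < 0 ↔ i = neg j) {ε : ℝ} (hε : 0 < ε) :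
    ∃ δ > 0, ∀ j, j + Fintype.card J < Module.finrank ℝ V →
      SphereExtends j (ball 0 δ ∩ {v ∈ linLocus ℓ | ∀ p, lam (u p) < 0 → gap ℓ p v = 0}
        ∩ outside lam) (ball 0 ε ∩ linLocus ℓ ∩ outside lam) := by
  classical
  have hne : ∀ j, (Finset.univ.erase (neg j)).Nonempty := fun j => by
    obtain ⟨i, hi⟩ := exists_ne (neg j)
    exact ⟨i, by simp [hi]⟩
  let e : (J → ℝ) → V := fun c => ∑ j, c j • u ⟨j, neg j⟩
  have he : ∀ (c : J → ℝ) (j : J), ∃ κ : ℝ, ∀ i,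
      ℓ j i (e c) = -(if i = neg j then c j else 0) + κ := by
    intro c j
    obtain ⟨κ, hκ⟩ := hu (fun p => if p.2 = neg p.1 then c p.1 else 0) j
    refine ⟨κ, fun i => ?_⟩
    rw [← hκ i]
    congr 1
    rw [Fintype.sum_sigma]
    refine Finset.sum_congr rfl fun j _ => ?_
    simp
  let M : J → V → ℝ := fun j v => (Finset.univ.erase (neg j)).sup' (hne j) fun i => ℓ j i v
  have hM : ∀ j v i₁, i₁ ≠ neg j → (∀ k, k ≠ neg j → ℓ j k v ≤ ℓ j i₁ v) → M j v = ℓ j i₁ v :=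
    fun j v i₁ h₁ h => le_antisymm (Finset.sup'_le _ _ fun k hk => h k (by simpa using hk))
      (Finset.le_sup' (fun i => ℓ j i v) (by simpa using h₁))
  have hMex : ∀ j v, ∃ i₁, i₁ ≠ neg j ∧ ∀ k, k ≠ neg j → ℓ j k v ≤ ℓ j i₁ v := by
    intro j v
    obtain ⟨i₁, h₁, h⟩ := Finset.exists_max_image _ (fun i => ℓ j i v) (hne j)
    exact ⟨i₁, by simpa using h₁, fun k hk => h k (by simpa using hk)⟩
  let c : V → J → ℝ := fun v j => ℓ j (neg j) v - M j v
  let R : V → V := fun v => v + e (c v)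
  have hRcont : Continuous R := by
    refine continuous_id.add (continuous_finsetSum _ fun j _ => Continuous.smul ?_ continuous_const)
    exact (ℓ j (neg j)).continuous.sub
      (Continuous.finset_sup'_apply _ fun i _ => (ℓ j i).continuous)
  have hRmem : ∀ v, R v ∈ linLocus ℓ ∧ ∀ p, lam (u p) < 0 → gap ℓ p (R v) = 0 := by
    intro v
    have key : ∀ j, ∃ i₁, i₁ ≠ neg j ∧ (∀ k, ℓ j k (R v) ≤ ℓ j (neg j) (R v)) ∧
        ∀ k, ℓ j k (R v) ≤ ℓ j i₁ (R v) := by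
      intro j
      obtain ⟨κ, hκ⟩ := he (c v) j
      obtain ⟨i₁, h₁, h⟩ := hMex j v
      have hMj := hM j v i₁ h₁ h
      have e1 : ℓ j (neg j) (R v) = M j v + κ := by
        simp only [R, map_add, hκ, if_true, c]; ring
      have e2 : ∀ k, k ≠ neg j → ℓ j k (R v) = ℓ j k v + κ := fun k hk => by
        simp only [R, map_add, hκ, if_neg hk]; ring
      have e3 : ∀ k, ℓ j k (R v) ≤ M j v + κ := by
        intro k
        by_cases hk : k = neg j
        · rw [hk, e1]
        · rw [e2 k hk, hMj]
          linarith [h k hk]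
      exact ⟨i₁, h₁, fun k => e1 ▸ e3 k, fun k => by rw [e2 i₁ h₁, ← hMj]; exact e3 k⟩
    constructor
    · intro j
      obtain ⟨i₁, h₁, h, h'⟩ := key j
      exact ⟨i₁, neg j, h₁, h', h⟩
    · rintro ⟨j, i⟩ hp
      rw [(hneg j i).1 hp, gap_eq_zero_iff]
      exact (key j).choose_spec.2.1
  have hRid : ∀ v ∈ linLocus ℓ, (∀ p, lam (u p) < 0 → gap ℓ p v = 0) → R v = v := by
    intro v hv hv0
    have : c v = 0 := by
      funext j
      have h0 := gap_eq_zero_iff.1 (hv0 ⟨j, neg j⟩ ((hneg j _).2 rfl))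
      obtain ⟨i, i', hne', hi, hi'⟩ := hv j
      obtain ⟨i₁, h₁, h⟩ : ∃ i₁, i₁ ≠ neg j ∧ ∀ k, ℓ j k v ≤ ℓ j i₁ v := by
        by_cases h : i = neg j
        · exact ⟨i', fun h' => hne' (h.trans h'.symm), hi'⟩
        · exact ⟨i, h, hi⟩
      have := hM j v i₁ h₁ fun k _ => h k
      simp only [c, Pi.zero_apply, this]
      linarith [h0 i₁, h (neg j)]
    simp [R, this, e]
  have hRadd : ∀ v τ, R (v + e τ) = R v := by
    intro v τ
    have : c (v + e τ) = c v - τ := by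
      funext j
      obtain ⟨κ, hκ⟩ := he τ j
      obtain ⟨i₁, h₁, h⟩ := hMex j v
      have h2 := hM j v i₁ h₁ h
      have h3 := hM j (v + e τ) i₁ h₁ fun k hk => by
        simp only [map_add, hκ, if_neg hk, if_neg h₁]
        linarith [h k hk]
      simp only [c, h2, h3, Pi.sub_apply, map_add, hκ, if_neg h₁, if_true]
      ring
    simp only [R, this, e, Pi.sub_apply, sub_smul, Finset.sum_sub_distrib]
    abel
  have hR0 : R 0 = 0 := hRid 0 zero_mem_linLocus fun p _ => by
    simpa using gap_smul (ℓ := ℓ) p le_rfl (0 : V)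
  let E : Submodule ℝ V := Submodule.span ℝ (range fun j => u ⟨j, neg j⟩)
  have heE : ∀ τ, e τ ∈ E := fun τ => Submodule.sum_mem _ fun j _ =>
    Submodule.smul_mem _ _ (Submodule.subset_span ⟨j, rfl⟩)
  have hEe : ∀ w ∈ E, ∃ τ, e τ = w := fun w hw => (Submodule.mem_span_range_iff_exists_fun ℝ).1 hw
  have hrank : Module.finrank ℝ V ≤ Module.finrank ℝ Eᗮ + Fintype.card J := by
    have h1 := E.finrank_add_finrank_orthogonal
    have h2 : Module.finrank ℝ E ≤ Fintype.card J := finrank_range_le_card _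
    omega
  let P : V → Eᗮ := fun v => Eᗮ.orthogonalProjectionOnto v
  have hRP : ∀ v, R (P v) = R v := by
    intro v
    obtain ⟨τ, hτ⟩ := hEe (v - P v) (by
      have := Submodule.sub_starProjection_mem_orthogonal (K := Eᗮ) v
      rwa [Submodule.orthogonal_orthogonal] at this)
    rw [← hRadd (P v) τ, hτ]
    congr 1
    abel
  have hRne : ∀ w : Eᗮ, w ≠ 0 → R w ≠ 0 := by
    intro w hw h
    have h1 : (w : V) ∈ E := by
      have : (w : V) = -e (c w) := eq_neg_of_add_eq_zero_left h
      rw [this]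
      exact E.neg_mem (heE _)
    exact hw (Subtype.ext (by simpa using inner_self_eq_zero.1 (w.2 _ h1)))
  have hRout : ∀ w : Eᗮ, w ≠ 0 → R w ∈ outside lam := by
    intro w hw
    change 0 < 2 * lam (R w) + ‖R w‖ ^ 2
    have h1 : 0 ≤ lam (R w) := by
      rw [hu.apply_eq_sum hL]
      refine Finset.sum_nonneg fun p _ => ?_
      by_cases hp : lam (u p) < 0
      · rw [(hRmem w).2 p hp, zero_mul]
      · exact mul_nonneg (gap_nonneg _ _) (not_lt.1 hp)
    have := norm_pos_iff.2 (hRne w hw)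
    positivity
  obtain ⟨δ, hδ, hRδ⟩ : ∃ δ > 0, ∀ v, ‖v‖ ≤ δ → ‖R v‖ < ε := by
    have h := hRcont.continuousAt (x := 0)
    rw [Metric.continuousAt_iff] at h
    obtain ⟨δ, hδ, h⟩ := h ε hε
    refine ⟨δ / 2, half_pos hδ, fun v hv => ?_⟩
    have := h (x := v) (by rw [dist_zero_right]; linarith)
    rwa [hR0, dist_zero_right] at this
  refine ⟨δ, hδ, fun j hj f hf hfA => ?_⟩
  have hPcont : Continuous P := Eᗮ.orthogonalProjectionOnto.continuous
  obtain ⟨g, hg, hg0, hgf⟩ := sphereExtends_compl_zero (W := Eᗮ) (j := j) (by omega)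
    (fun x => P (f x)) (hPcont.comp_continuousOn hf) fun x hx h0 => by
      obtain ⟨⟨-, hfx, hfx0⟩, hout⟩ := hfA hx
      have h0 : P (f x) = 0 := h0
      have h1 : f x = 0 := by
        rw [← hRid _ hfx hfx0, ← hRP, h0]
        simpa using hR0
      have h2 : 0 < 2 * lam (f x) + ‖f x‖ ^ 2 := hout
      simp [h1] at h2
  let g' : (Fin j → ℝ) → Eᗮ := fun x => min 1 (δ / ‖g x‖) • g x
  have hgpos : ∀ x ∈ closedBall (0 : Fin j → ℝ) 1, 0 < ‖g x‖ := fun x hx =>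
    norm_pos_iff.2 (hg0 hx)
  have hg'0 : ∀ x ∈ closedBall (0 : Fin j → ℝ) 1, g' x ≠ 0 := fun x hx =>
    smul_ne_zero (lt_min one_pos (div_pos hδ (hgpos x hx))).ne' (hg0 hx)
  have hg'cont : ContinuousOn g' (closedBall 0 1) :=
    (ContinuousOn.inf continuousOn_const
      (continuousOn_const.div hg.norm fun x hx => (hgpos x hx).ne')).smul hg
  refine ⟨fun x => R (g' x), hRcont.comp_continuousOn
    (continuous_subtype_val.comp_continuousOn hg'cont), ?_, ?_⟩
  · intro x hx
    refine ⟨⟨mem_ball_zero_iff.2 (hRδ _ ?_), (hRmem _).1⟩, hRout _ (hg'0 x hx)⟩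
    have h1 := hgpos x hx
    change ‖g' x‖ ≤ δ
    rw [norm_smul, Real.norm_of_nonneg (by positivity)]
    calc min 1 (δ / ‖g x‖) * ‖g x‖ ≤ δ / ‖g x‖ * ‖g x‖ :=
          mul_le_mul_of_nonneg_right (min_le_right _ _) h1.le
      _ = δ := div_mul_cancel₀ _ h1.ne'
  · intro x hx
    obtain ⟨⟨hfb, hfx, hfx0⟩, -⟩ := hfA hx
    have h1 := hgpos x (sphere_subset_closedBall hx)
    have h2 : ‖g x‖ ≤ δ := by
      rw [hgf hx]
      exact (Eᗮ.norm_orthogonalProjectionOnto_apply_le _).trans (mem_ball_zero_iff.1 hfb).le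
    have h3 : g' x = P (f x) := by
      simp only [g', min_eq_left ((one_le_div h1).2 h2), one_smul]
      exact hgf hx
    change R (g' x) = f x
    rw [h3, hRP, hRid _ hfx hfx0]

/-- The part of the linear locus outside a sphere through the origin in general position is locally
highly connected. -/
theorem exists_sphereExtends_linLocus_outside
    (hsurj : ∀ c : ∀ j, I j → ℝ, ∃ v, ∃ κ : J → ℝ, ∀ j i, ℓ j i v = c j i + κ j)
    (hgen : ∀ j₀, ∃ v, (∀ j, j ≠ j₀ → ∀ i i', ℓ j i v = ℓ j i' v) ∧ lam v ≠ 0)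
    {ε : ℝ} (hε : 0 < ε) :
    ∃ δ > 0, ∀ j, j + Fintype.card J < Module.finrank ℝ V →
      SphereExtends j (ball 0 δ ∩ linLocus ℓ ∩ outside lam)
        (ball 0 ε ∩ linLocus ℓ ∩ outside lam) := by
  classical
  by_cases hL : ∀ v, (∀ j i i', ℓ j i v = ℓ j i' v) → lam v = 0
  swap
  · push Not at hL
    obtain ⟨w, hw, hw0⟩ := hL
    obtain ⟨w, hw, hw0⟩ : ∃ w, (∀ j i i', ℓ j i w = ℓ j i' w) ∧ 0 < lam w := by
      rcases lt_or_gt_of_ne hw0 with h | h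
      · exact ⟨-w, fun j i i' => by simp [hw j i i'], by simpa using h⟩
      · exact ⟨w, hw, h⟩
    obtain ⟨δ, hδ, h⟩ := exists_sphereExtends_of_direction (T := linLocus ℓ)
      (T' := linLocus ℓ) zero_mem_linLocus
      (fun v hv s hs => smul_mem_linLocus hv hs) (fun v hv t ht => by
        rw [mem_linLocus_iff (ℓ := ℓ)] at hv ⊢
        intro j
        obtain ⟨i, i', hne, h, h'⟩ := hv j
        have hc : ∀ k, ℓ j k (t • w) = t * ℓ j i w := fun k => by
          rw [map_smul, smul_eq_mul, hw j k i]
        exact ⟨i, i', hne, by rw [gap_add_of_const hc, h], by rw [gap_add_of_const hc, h']⟩) hw0 hε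
    exact ⟨δ, hδ, fun j _ => h j⟩
  obtain ⟨u, hu⟩ := exists_isDualSystem hsurj
  have hsum : ∀ j, ∑ i, lam (u ⟨j, i⟩) = 0 := by
    intro j
    have h := hL (∑ p, (if p.1 = j then 1 else 0 : ℝ) • u p) fun j' i i' => by
      obtain ⟨κ, hκ⟩ := hu (fun p => if p.1 = j then 1 else 0) j'
      rw [hκ, hκ]
    rw [map_sum, Fintype.sum_sigma, Finset.sum_eq_single j] at h
    · simpa using h
    · intro j' _ hj'
      simp [hj']
    · simp
  have hnz : ∀ j, ∃ i, lam (u ⟨j, i⟩) ≠ 0 := by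
    intro j
    by_contra! h
    obtain ⟨v, hv, hv0⟩ := hgen j
    apply hv0
    rw [hu.apply_eq_sum hL]
    refine Finset.sum_eq_zero ?_
    rintro ⟨j', i⟩ -
    by_cases hj : j' = j
    · subst hj
      rw [h i, mul_zero]
    · rw [gap_eq_zero_iff.2 fun k => (hv j' hj k i).le, zero_mul]
  have hpos : ∀ j, ∃ i, 0 < lam (u ⟨j, i⟩) := fun j => by
    obtain ⟨i, hi⟩ := hnz j
    obtain ⟨i, -, h⟩ := Finset.exists_pos_of_sum_zero_of_exists_nonzero _ (hsum j)
      ⟨i, Finset.mem_univ i, hi⟩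
    exact ⟨i, h⟩
  have hneg : ∀ j, ∃ i, lam (u ⟨j, i⟩) < 0 := fun j => by
    obtain ⟨i, hi⟩ := hnz j
    obtain ⟨i, -, h⟩ := Finset.exists_pos_of_sum_zero_of_exists_nonzero (s := Finset.univ)
      (fun i => -lam (u ⟨j, i⟩)) (by rw [Finset.sum_neg_distrib, hsum j, neg_zero])
      ⟨i, Finset.mem_univ i, neg_ne_zero.2 hi⟩
    exact ⟨i, neg_pos.1 h⟩
  suffices h : ∃ δ > 0, ∀ j, j + Fintype.card J < Module.finrank ℝ V →
      SphereExtends j (ball 0 δ ∩ {v ∈ linLocus ℓ | ∀ p, lam (u p) < 0 → gap ℓ p v = 0}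
        ∩ outside lam) (ball 0 ε ∩ linLocus ℓ ∩ outside lam) by
    obtain ⟨δ', hδ', h'⟩ := h
    obtain ⟨δ, hδ, h⟩ := hu.sphereExtends_of_neg (lam := lam) hε hδ'
    exact ⟨δ, hδ, fun j hj => h j (h' j hj)⟩
  by_cases htwo : ∃ j a a', a ≠ a' ∧ lam (u ⟨j, a⟩) < 0 ∧ lam (u ⟨j, a'⟩) < 0
  · obtain ⟨j₀, a, a', hne, ha, ha'⟩ := htwo
    obtain ⟨i₀, hi₀⟩ := hpos j₀
    have hai : a ≠ i₀ := fun h => by rw [h] at ha; exact lt_asymm ha hi₀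
    have hai' : a' ≠ i₀ := fun h => by rw [h] at ha'; exact lt_asymm ha' hi₀
    have hmove : ∀ v ∈ {v ∈ linLocus ℓ | ∀ p, lam (u p) < 0 → gap ℓ p v = 0}, ∀ t : ℝ, 0 ≤ t →
        v + t • u ⟨j₀, i₀⟩ ∈ linLocus ℓ := by
      rintro v ⟨hv, hv0⟩ t ht
      have e : ∑ p, (if p = ⟨j₀, i₀⟩ then t else 0) • u p = t • u ⟨j₀, i₀⟩ := by simp
      have two : ∀ j, ∃ i i', i ≠ i' ∧ (⟨j, i⟩ : Σ j, I j) ≠ ⟨j₀, i₀⟩ ∧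
          (⟨j, i'⟩ : Σ j, I j) ≠ ⟨j₀, i₀⟩ ∧ gap ℓ ⟨j, i⟩ v = 0 ∧ gap ℓ ⟨j, i'⟩ v = 0 := by
        intro j
        by_cases hj : j = j₀
        · subst hj
          exact ⟨a, a', hne, by simpa using hai, by simpa using hai', hv0 _ ha, hv0 _ ha'⟩
        · obtain ⟨i, i', hne, h, h'⟩ := mem_linLocus_iff.1 hv j
          exact ⟨i, i', hne, by simp [hj], by simp [hj], h, h'⟩
      have hadd := hu.gap_add (fun p => if p = ⟨j₀, i₀⟩ then t else 0) (v := v)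
        (fun p => add_nonneg (gap_nonneg _ _) (by positivity)) fun j => by
          obtain ⟨i, i', -, hi, -, h, -⟩ := two j
          exact ⟨i, by simp only [h, if_neg hi, add_zero]⟩
      rw [e] at hadd
      rw [mem_linLocus_iff]
      intro j
      obtain ⟨i, i', hne, hi, hi', h, h'⟩ := two j
      exact ⟨i, i', hne, by simp only [hadd, h, if_neg hi, add_zero],
        by simp only [hadd, h', if_neg hi', add_zero]⟩
    obtain ⟨δ, hδ, h⟩ := exists_sphereExtends_of_direction (T := linLocus ℓ)
      (T' := {v ∈ linLocus ℓ | ∀ p, lam (u p) < 0 → gap ℓ p v = 0}) (u := u ⟨j₀, i₀⟩)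
      ⟨zero_mem_linLocus, fun p _ => by simpa using gap_smul (ℓ := ℓ) p le_rfl (0 : V)⟩
      (fun v hv s hs => ⟨smul_mem_linLocus hv.1 hs, fun p hp => by
        rw [gap_smul _ hs, hv.2 p hp, mul_zero]⟩) hmove hi₀ hε
    exact ⟨δ, hδ, fun j _ => h j⟩
  · push Not at htwo
    choose neg hnegj using hneg
    refine hu.sphereExtends_of_unique_neg hL (neg := neg) (fun j i => ⟨fun h => ?_, ?_⟩) hε
    · by_contra hne
      exact (hnegj j).not_ge (htwo j i (neg j) hne h)
    · rintro rfl
      exact hnegj j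

end LinearLocus

section AffineLocus

theorem SphereExtends.translate {V : Type*} [NormedAddCommGroup V] {j : ℕ} {A B A' B' : Set V} (x : V) (h : SphereExtends j A B)
    (hA : ∀ w ∈ A', w - x ∈ A) (hB : ∀ v ∈ B, x + v ∈ B') : SphereExtends j A' B' := by
  intro f hf hfA
  obtain ⟨g, hg, hgB, hgf⟩ := h (fun y => f y - x) (hf.sub continuousOn_const)
    fun y hy => hA _ (hfA hy)
  exact ⟨fun y => x + g y, continuousOn_const.add hg, fun y hy => hB _ (hgB hy), fun y hy => by
    simp [hgf hy]⟩

variable {V : Type*} [NormedAddCommGroup V] [InnerProductSpace ℝ V]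
  {J : Type*} {K : J → Type*} {b : ∀ j, K j → V} {a : ∀ j, K j → ℝ}

/-- The affine functions of colour `j` which attain the maximum at `x`. -/
def activeSet (b : ∀ j, K j → V) (a : ∀ j, K j → ℝ) (x : V) (j : J) : Set (K j) :=
  {i | ∀ k, ⟪b j k, x⟫ + a j k ≤ ⟪b j i, x⟫ + a j i}

/-- The points at which, for every colour, at least two affine functions attain the maximum. -/
def affLocus (b : ∀ j, K j → V) (a : ∀ j, K j → ℝ) : Set V :=
  {x | ∀ j, (activeSet b a x j).Nontrivial}

/-- The active differences of gradients are linearly independent at every point of the locus. -/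
def IsTransverse (b : ∀ j, K j → V) (a : ∀ j, K j → ℝ) : Prop :=
  ∀ x ∈ affLocus b a, ∀ c : ∀ j, K j → ℝ, ∃ v, ∃ κ : J → ℝ, ∀ j, ∀ i ∈ activeSet b a x j,
    ⟪b j i, v⟫ = c j i + κ j

theorem eq_of_mem_activeSet {x : V} {j : J} {i i' : K j} (hi : i ∈ activeSet b a x j)
    (hi' : i' ∈ activeSet b a x j) : ⟪b j i, x⟫ + a j i = ⟪b j i', x⟫ + a j i' :=
  le_antisymm (hi' i) (hi i')

theorem isClosed_affLocus [∀ j, Finite (K j)] : IsClosed (affLocus b a) := by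
  have h : affLocus b a = ⋂ j, ⋃ i, ⋃ i', {x | i ∈ activeSet b a x j ∧ i' ∈ activeSet b a x j ∧
      i ≠ i'} := by
    ext x
    simp only [affLocus, Set.Nontrivial, mem_iInter, mem_iUnion, mem_ofPred_eq]
    exact forall_congr' fun j => exists_congr fun i =>
      ⟨fun ⟨h1, i', h2, h3⟩ => ⟨i', h1, h2, h3⟩, fun ⟨i', h1, h2, h3⟩ => ⟨h1, i', h2, h3⟩⟩
  rw [h]
  have hc : ∀ j (i : K j), IsClosed {x | i ∈ activeSet b a x j} := by
    intro j i
    have e : {x | i ∈ activeSet b a x j} =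
        ⋂ k, {x | ⟪b j k, x⟫ + a j k ≤ ⟪b j i, x⟫ + a j i} := by
      ext x
      simp [activeSet]
    rw [e]
    exact isClosed_iInter fun k => isClosed_le (by fun_prop) (by fun_prop)
  exact isClosed_iInter fun j => isClosed_iUnion_of_finite fun i => isClosed_iUnion_of_finite
    fun i' => (hc j i).inter ((hc j i').inter isClosed_const)

variable [Finite J] [∀ j, Finite (K j)]

/-- Near `x`, the locus is the translate of the linear locus of the active gradients. -/
theorem exists_forall_mem_affLocus_iff {x : V} (hx : x ∈ affLocus b a) :
    ∃ ρ > 0, ∀ v, ‖v‖ < ρ → (x + v ∈ affLocus b a ↔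
      v ∈ linLocus fun j (i : activeSet b a x j) => innerSL ℝ (b j i)) := by
  have hev : ∀ᶠ v in 𝓝 (0 : V), ∀ j (i i₀ : K j), i ∉ activeSet b a x j → i₀ ∈ activeSet b a x j →
      ⟪b j i, x + v⟫ + a j i < ⟪b j i₀, x + v⟫ + a j i₀ := by
    simp only [Filter.eventually_all]
    intro j i i₀ hi hi₀
    refine ContinuousAt.eventually_lt (by fun_prop) (by fun_prop) ?_
    simp only [add_zero]
    simp only [activeSet, mem_ofPred_eq, not_forall, not_le] at hi
    obtain ⟨k, hk⟩ := hi
    exact hk.trans_le (hi₀ k)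
  obtain ⟨ρ, hρ, h⟩ := Metric.eventually_nhds_iff.1 hev
  refine ⟨ρ, hρ, fun v hv => forall_congr' fun j => ?_⟩
  have h := h (y := v) (by simpa using hv)
  obtain ⟨i₀, hi₀⟩ := (hx j).nonempty
  have hsub : activeSet b a (x + v) j ⊆ activeSet b a x j := by
    intro i hi
    by_contra hi'
    exact (h j i i₀ hi' hi₀).not_ge (hi i₀)
  have hiff : ∀ i : activeSet b a x j, (i : K j) ∈ activeSet b a (x + v) j ↔
      ∀ k : activeSet b a x j, innerSL ℝ (b j k) v ≤ innerSL ℝ (b j i) v := by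
    rintro ⟨i, hi⟩
    constructor
    · rintro h1 ⟨k, hk⟩
      have h2 := h1 k
      have h3 := eq_of_mem_activeSet hi hk
      simp only [inner_add_right, innerSL_apply_apply] at h2 ⊢
      linarith
    · intro h1 k
      by_cases hk : k ∈ activeSet b a x j
      · have h2 := h1 ⟨k, hk⟩
        have h3 := eq_of_mem_activeSet hi hk
        simp only [inner_add_right, innerSL_apply_apply] at h2 ⊢
        linarith
      · exact (h j k i hk hi).le
  constructor
  · rintro ⟨i, hi, i', hi', hne⟩
    exact ⟨⟨i, hsub hi⟩, ⟨i', hsub hi'⟩, by simpa using hne, (hiff ⟨i, _⟩).1 hi,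
      (hiff ⟨i', _⟩).1 hi'⟩
  · rintro ⟨i, i', hne, hi, hi'⟩
    exact ⟨i, (hiff i).2 hi, i', (hiff i').2 hi', fun h => hne (Subtype.ext h)⟩

variable [FiniteDimensional ℝ V]

/-- A generic centre: the distance to it is not critical on any stratum of lower codimension. -/
theorem IsTransverse.exists_center (hba : IsTransverse b a) : ∃ p : V, ∀ x ∈ affLocus b a,
    ∀ j₀, ∃ v, (∀ j, j ≠ j₀ → ∀ i ∈ activeSet b a x j, ∀ i' ∈ activeSet b a x j,
      ⟪b j i, v⟫ = ⟪b j i', v⟫) ∧ ⟪x - p, v⟫ ≠ 0 := by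
  classical
  have key : ∀ q : (∀ j, Set (K j)) × J, ∃ U : Set V, IsOpen U ∧ Dense U ∧ ∀ p ∈ U,
      ∀ x ∈ affLocus b a, q.1 = activeSet b a x → ∃ v, (∀ j, j ≠ q.2 →
        ∀ i ∈ activeSet b a x j, ∀ i' ∈ activeSet b a x j, ⟪b j i, v⟫ = ⟪b j i', v⟫) ∧
        ⟪x - p, v⟫ ≠ 0 := by
    rintro ⟨A, j₀⟩
    by_cases hex : ∃ x₀ ∈ affLocus b a, activeSet b a x₀ = A
    swap
    · exact ⟨univ, isOpen_univ, dense_univ, fun p _ x hx hA => absurd ⟨x, hx, hA.symm⟩ hex⟩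
    obtain ⟨x₀, hx₀, rfl⟩ := hex
    let L : Submodule ℝ V :=
      { carrier := {v | ∀ j, ∀ i ∈ activeSet b a x₀ j, ∀ i' ∈ activeSet b a x₀ j,
          ⟪b j i, v⟫ = ⟪b j i', v⟫}
        add_mem' := fun {v w} hv hw j i hi i' hi' => by
          rw [inner_add_right, inner_add_right, hv j i hi i' hi', hw j i hi i' hi']
        zero_mem' := fun j i _ i' _ => by simp
        smul_mem' := fun s v hv j i hi i' hi' => by
          rw [inner_smul_right, inner_smul_right, hv j i hi i' hi'] }
    obtain ⟨i₁, hi₁, i₂, hi₂, hne⟩ := hx₀ j₀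
    obtain ⟨v, κ, hv⟩ := hba x₀ hx₀ fun j i => if (⟨j, i⟩ : Σ j, K j) = ⟨j₀, i₁⟩ then 1 else 0
    have hvL : v ∉ L := fun h => by
      have := h j₀ i₁ hi₁ i₂ hi₂
      rw [hv j₀ i₁ hi₁, hv j₀ i₂ hi₂] at this
      simp [hne.symm] at this
    let w : V := v - L.starProjection v
    have hwL : w ∈ Lᗮ := L.sub_starProjection_mem_orthogonal v
    have hw0 : w ≠ 0 := fun h => hvL <| by
      rw [sub_eq_zero.1 h]
      exact L.starProjection_apply_mem v
    refine ⟨{p | ⟪w, p⟫ ≠ ⟪w, x₀⟫}, isOpen_ne_fun (by fun_prop) (by fun_prop), ?_, ?_⟩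
    · refine Dense.preimage (f := innerSL ℝ w) (dense_compl_singleton ⟪w, x₀⟫)
        (ContinuousLinearMap.isOpenMap_of_ne_zero _ fun h => hw0 ?_)
      have := congrArg (fun φ => φ w) h
      simpa using this
    · intro p hp x hx hA
      dsimp only at hA
      refine ⟨w, fun j hj i hi i' hi' => ?_, ?_⟩
      · rw [← hA] at hi hi'
        have h1 := L.starProjection_apply_mem v j i hi i' hi'
        have h2 := hv j i hi
        have h3 := hv j i' hi'
        simp only [Sigma.mk.injEq, hj, false_and, if_false, zero_add] at h2 h3
        simp only [w, inner_sub_right, h1, h2, h3]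
      · have hL : x - x₀ ∈ L := fun j i hi i' hi' => by
          have h1 := eq_of_mem_activeSet hi hi'
          rw [hA] at hi hi'
          have h2 := eq_of_mem_activeSet hi hi'
          simp only [inner_sub_right]
          linarith
        have h1 : ⟪x - x₀, w⟫ = 0 := hwL _ hL
        intro h2
        apply hp
        rw [inner_sub_left] at h1 h2
        rw [real_inner_comm, real_inner_comm x₀]
        linarith
  choose U hUo hUd hU using key
  obtain ⟨p, hp⟩ := (dense_iInter_of_isOpen hUo hUd).nonempty
  exact ⟨p, fun x hx j₀ => hU ⟨activeSet b a x, j₀⟩ p (mem_iInter.1 hp _) x hx rfl⟩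

theorem IsTransverse.spaceMConnected [Fintype J] (hba : IsTransverse b a) {m : ℕ}
    (hm : m + Fintype.card J < Module.finrank ℝ V) :
    SpaceMConnected m (OnePoint (affLocus b a)) := by
  obtain ⟨p, hp⟩ := hba.exists_center
  have hnt : ∀ x ∈ affLocus b a, ∀ j, Nontrivial (activeSet b a x j) := fun x hx j =>
    (hx j).coe_sort
  refine onePoint_spaceMConnected isClosed_affLocus p ?_ ?_
  · intro x hx ε hε
    have := hnt x hx
    have : ∀ j, Fintype (activeSet b a x j) := fun j => Fintype.ofFinite _
    obtain ⟨ρ, hρ, h⟩ := exists_forall_mem_affLocus_iff hx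
    have hpos : 0 < min ρ ε := lt_min hρ hε
    refine ⟨min ρ ε, hpos, fun j => (sphereExtends_linLocus
      (ℓ := fun j (i : activeSet b a x j) => innerSL ℝ (b j i)) hpos j).translate x ?_ ?_⟩
    · rintro w ⟨hw, hwX⟩
      rw [mem_ball, dist_eq_norm] at hw
      refine ⟨mem_ball_zero_iff.2 hw, (h _ (hw.trans_le (min_le_left _ _))).1 ?_⟩
      simpa using hwX
    · rintro v ⟨hv, hvT⟩
      rw [mem_ball_zero_iff] at hv
      refine ⟨?_, (h _ (hv.trans_le (min_le_left _ _))).2 hvT⟩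
      simpa using hv.trans_le (min_le_right _ _)
  · intro x hx ε hε
    have := hnt x hx
    have : ∀ j, Fintype (activeSet b a x j) := fun j => Fintype.ofFinite _
    obtain ⟨ρ, hρ, h⟩ := exists_forall_mem_affLocus_iff hx
    have hpos : 0 < min ρ ε := lt_min hρ hε
    obtain ⟨δ, hδ, hS⟩ := exists_sphereExtends_linLocus_outside
      (ℓ := fun j (i : activeSet b a x j) => innerSL ℝ (b j i)) (lam := innerSL ℝ (x - p))
      (fun c => by
        classical
        obtain ⟨v, κ, hv⟩ := hba x hx fun j i =>
          if hi : i ∈ activeSet b a x j then c j ⟨i, hi⟩ else 0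
        refine ⟨v, κ, fun j i => ?_⟩
        simpa using hv j i i.2)
      (fun j₀ => by
        obtain ⟨v, hv, hv0⟩ := hp x hx j₀
        exact ⟨v, fun j hj i i' => hv j hj i i.2 i' i'.2, hv0⟩) hpos
    have hout : ∀ v, v ∈ outside (innerSL ℝ (x - p)) ↔ dist x p < dist (x + v) p := by
      intro v
      have e : ‖x + v - p‖ ^ 2 = ‖x - p‖ ^ 2 + (2 * ⟪x - p, v⟫ + ‖v‖ ^ 2) := by
        rw [add_sub_right_comm, norm_add_sq_real]
        ring
      rw [dist_eq_norm, dist_eq_norm, ← pow_lt_pow_iff_left₀ (norm_nonneg _) (norm_nonneg _)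
        two_ne_zero, e]
      simp only [outside, mem_ofPred_eq, innerSL_apply_apply, lt_add_iff_pos_right]
    refine ⟨min ρ δ, lt_min hρ hδ, fun j hj => (hS j (by omega)).translate x ?_ ?_⟩
    · rintro w ⟨⟨hw, hwo⟩, hwX⟩
      rw [mem_ball, dist_eq_norm] at hw
      refine ⟨⟨mem_ball_zero_iff.2 (hw.trans_le (min_le_right _ _)),
        (h _ (hw.trans_le (min_le_left _ _))).1 ?_⟩, (hout _).2 ?_⟩
      · simpa using hwX
      · simpa using hwo
    · rintro v ⟨⟨hv, hvT⟩, hvo⟩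
      rw [mem_ball_zero_iff] at hv
      refine ⟨⟨?_, (hout v).1 hvo⟩, (h _ (hv.trans_le (min_le_left _ _))).2 hvT⟩
      simpa using hv.trans_le (min_le_right _ _)

end AffineLocus

section BendLocus

theorem le_plMax {d r : ℕ} (b : Fin r → EuclideanSpace ℝ (Fin d)) (a : Fin r → ℝ) (i : Fin r)
    (x : EuclideanSpace ℝ (Fin d)) : ⟪b i, x⟫ + a i ≤ plMax b a x := by
  rw [real_inner_comm]
  exact le_ciSup (f := fun i => ⟪x, b i⟫ + a i) (finite_range _).bddAbove i

theorem plMax_eq {d r : ℕ} {b : Fin r → EuclideanSpace ℝ (Fin d)} {a : Fin r → ℝ} {i : Fin r}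
    {x : EuclideanSpace ℝ (Fin d)} (h : ∀ k, ⟪b k, x⟫ + a k ≤ ⟪b i, x⟫ + a i) :
    plMax b a x = ⟪b i, x⟫ + a i := by
  have : Nonempty (Fin r) := ⟨i⟩
  refine le_antisymm (ciSup_le fun k => ?_) (le_plMax b a i x)
  rw [real_inner_comm]
  exact h k

theorem hasFDerivAt_inner_add_const {V : Type*} [NormedAddCommGroup V] [InnerProductSpace ℝ V]
    (b : V) (a : ℝ) (x : V) : HasFDerivAt (fun x => ⟪b, x⟫ + a) (innerSL ℝ b) x :=
  (innerSL ℝ b).hasFDerivAt.add_const a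

theorem mem_bendLocus_iff {d n : ℕ} {r : Fin n → ℕ} {j : Fin n} [Nonempty (Fin (r j))]
    {b : ∀ j, Fin (r j) → EuclideanSpace ℝ (Fin d)} {a : ∀ j, Fin (r j) → ℝ}
    (hb : Function.Injective (b j)) {x : EuclideanSpace ℝ (Fin d)} :
    x ∈ bendLocus (b j) (a j) ↔ (activeSet b a x j).Nontrivial := by
  constructor
  · intro hx
    by_contra hsub
    rw [not_nontrivial_iff] at hsub
    obtain ⟨i₀, hi₀⟩ := Finite.exists_max fun i => ⟪b j i, x⟫ + a j i
    have hlt : ∀ k, k ≠ i₀ → ⟪b j k, x⟫ + a j k < ⟪b j i₀, x⟫ + a j i₀ := by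
      intro k hk
      refine lt_of_le_of_ne (hi₀ k) fun h => hk (hsub (x := k) (y := i₀) ?_ hi₀)
      intro k'
      rw [h]
      exact hi₀ k'
    have hev : ∀ᶠ y in 𝓝 x, ∀ k, k ≠ i₀ → ⟪b j k, y⟫ + a j k < ⟪b j i₀, y⟫ + a j i₀ := by
      simp only [Filter.eventually_all]
      intro k hk
      exact ContinuousAt.eventually_lt (by fun_prop) (by fun_prop) (hlt k hk)
    apply hx
    refine ((hasFDerivAt_inner_add_const (b j i₀) (a j i₀) x).congr_of_eventuallyEq
      (hev.mono fun y hy => plMax_eq fun k => ?_)).differentiableAt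
    by_cases hk : k = i₀
    · rw [hk]
    · exact (hy k hk).le
  · rintro ⟨i, hi, i', hi', hne⟩ hdiff
    have key : ∀ i ∈ activeSet b a x j, fderiv ℝ (plMax (b j) (a j)) x = innerSL ℝ (b j i) := by
      intro i hi
      have hmin : IsLocalMin (fun y => plMax (b j) (a j) y - (⟪b j i, y⟫ + a j i)) x :=
        Filter.Eventually.of_forall fun y => by
          change plMax (b j) (a j) x - _ ≤ _
          rw [plMax_eq hi, sub_self]
          exact sub_nonneg.2 (le_plMax _ _ _ _)
      exact sub_eq_zero.1 (hmin.hasFDerivAt_eq_zero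
        (hdiff.hasFDerivAt.sub (hasFDerivAt_inner_add_const _ _ _)))
    refine hne (hb ?_)
    have h := (key i hi).symm.trans (key i' hi')
    refine ext_inner_right ℝ fun v => ?_
    exact congrArg (fun φ => φ v) h

theorem iInter_bendLocus {d n : ℕ} {r : Fin n → ℕ} (hr : ∀ j, 2 ≤ r j)
    {b : ∀ j, Fin (r j) → EuclideanSpace ℝ (Fin d)} {a : ∀ j, Fin (r j) → ℝ}
    (hb : ∀ j, Function.Injective (b j)) :
    ⋂ j, bendLocus (b j) (a j) = affLocus b a := by
  ext x
  rw [mem_iInter]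
  refine forall_congr' fun j => ?_
  have : Nonempty (Fin (r j)) := ⟨⟨0, by have := hr j; omega⟩⟩
  exact mem_bendLocus_iff (hb j)

end BendLocus

section Generic

theorem LinearIndependent.exists_linearMap_apply_eq_single {ι W : Type*} [DecidableEq ι]
    [Finite ι] [AddCommGroup W] [Module ℝ W] {w : ι → W} (hw : LinearIndependent ℝ w) :
    ∃ A : W →ₗ[ℝ] (ι → ℝ), ∀ e, A (w e) = Pi.single e 1 := by
  obtain ⟨A, hA⟩ := LinearMap.exists_leftInverse_of_injective _
    (LinearMap.ker_eq_bot.2 hw : LinearMap.ker (Finsupp.linearCombination ℝ w) = ⊥)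
  refine ⟨(Finsupp.linearEquivFunOnFinite ℝ ℝ ι).toLinearMap ∘ₗ A, fun e => ?_⟩
  have h := LinearMap.congr_fun hA (Finsupp.single e 1)
  simp only [LinearMap.comp_apply, Finsupp.linearCombination_single, one_smul,
    LinearMap.id_apply] at h
  simp [h]

/-- Linear independence of vectors depending linearly on a parameter is a generic property as soon
as it holds for one parameter. -/
theorem ae_linearIndependent {F W ι : Type*} [NormedAddCommGroup F] [NormedSpace ℝ F]
    [FiniteDimensional ℝ F] [MeasurableSpace F] [BorelSpace F] (ν : Measure F)
    [ν.IsAddHaarMeasure] [NormedAddCommGroup W] [NormedSpace ℝ W] [FiniteDimensional ℝ W]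
    [Finite ι] (φ : ι → F →ₗ[ℝ] W) {q : F} (hq : LinearIndependent ℝ fun e => φ e q) :
    ∀ᵐ p ∂ν, LinearIndependent ℝ fun e => φ e p := by
  classical
  have := Fintype.ofFinite ι
  have hcont : Continuous fun p => fun e => φ e p :=
    continuous_pi fun e => (φ e).continuous_of_finiteDimensional
  have hopen : IsOpen {p | LinearIndependent ℝ fun e => φ e p} :=
    isOpen_setOfPred_linearIndependent.preimage hcont
  refine ae_mem_of_ae_add_linearMap_mem (s := {p | LinearIndependent ℝ fun e => φ e p})
    (LinearMap.toSpanSingleton ℝ F q) volume ν hopen.measurableSet fun p => ?_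
  obtain ⟨A, hA⟩ := hq.exists_linearMap_apply_eq_single
  let B : Matrix ι ι ℝ := Matrix.of fun e => A (φ e p)
  have hfin : {t : ℝ | (-B).charpoly.eval t = 0}.Finite := by
    refine (-B).charpoly.roots.toFinset.finite_toSet.subset fun t ht => ?_
    simpa [(Matrix.charpoly_monic (-B)).ne_zero] using ht
  filter_upwards [hfin.countable.ae_notMem volume] with t ht
  refine LinearIndependent.of_comp A ?_
  have hrow : (A ∘ fun e => φ e (p + LinearMap.toSpanSingleton ℝ F q t)) =
      fun e => (Matrix.scalar ι t - -B) e := by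
    funext e
    simp only [Function.comp_apply, LinearMap.toSpanSingleton_apply, map_add, map_smul, hA]
    funext e'
    simp only [Pi.add_apply, Pi.smul_apply, smul_eq_mul, Matrix.sub_apply, Matrix.neg_apply,
      Matrix.scalar_apply, Matrix.diagonal_apply, Pi.single_apply, B, Matrix.of_apply,
      sub_neg_eq_add, eq_comm (a := e)]
    split_ifs <;> ring
  rw [hrow]
  refine Matrix.linearIndependent_rows_of_isUnit ?_
  rw [Matrix.isUnit_iff_isUnit_det, isUnit_iff_ne_zero]
  intro h0
  exact ht ((Matrix.eval_charpoly (-B) t).trans h0)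

/-- Generic differences from a chosen base of each colour are linearly independent. -/
theorem ae_linearIndependent_differences {d n : ℕ} {r : Fin n → ℕ} {W : Type*}
    [NormedAddCommGroup W] [NormedSpace ℝ W] [FiniteDimensional ℝ W]
    (π : EuclideanSpace ℝ (Fin d) × ℝ →ₗ[ℝ] W) (hπ : Function.Surjective π)
    (base : ∀ j, Fin (r j)) (S : Finset (Σ j, Fin (r j))) (hS : ∀ e ∈ S, e.2 ≠ base e.1)
    (hcard : S.card ≤ Module.finrank ℝ W) :
    ∀ᵐ p ∂(volume : Measure (Π j : Fin n, Fin (r j) → EuclideanSpace ℝ (Fin d) × ℝ)),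
      LinearIndependent ℝ fun e : S => π (p e.1.1 e.1.2 - p e.1.1 (base e.1.1)) := by
  classical
  have h₁ : (volume : Measure (EuclideanSpace ℝ (Fin d) × ℝ)).IsAddHaarMeasure :=
    Measure.prod.instIsAddHaarMeasure volume volume
  have h₂ : ∀ j, (volume : Measure (Fin (r j) → EuclideanSpace ℝ (Fin d) × ℝ)).IsAddHaarMeasure :=
    fun j => Measure.pi.isAddHaarMeasure fun _ => volume
  have h₃ : (volume :
      Measure (Π j : Fin n, Fin (r j) → EuclideanSpace ℝ (Fin d) × ℝ)).IsAddHaarMeasure :=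
    Measure.pi.isAddHaarMeasure fun _ => volume
  obtain ⟨emb⟩ : Nonempty (S ↪ Fin (Module.finrank ℝ W)) :=
    Function.Embedding.nonempty_of_card_le (by simpa using hcard)
  choose sec hsec using hπ
  let q : Π j : Fin n, Fin (r j) → EuclideanSpace ℝ (Fin d) × ℝ := fun j i =>
    if h : ⟨j, i⟩ ∈ S then sec (Module.finBasis ℝ W (emb ⟨⟨j, i⟩, h⟩)) else 0
  let φ : S → (Π j : Fin n, Fin (r j) → EuclideanSpace ℝ (Fin d) × ℝ) →ₗ[ℝ] W := fun e =>
    π ∘ₗ ((LinearMap.proj e.1.2 : (Fin (r e.1.1) → EuclideanSpace ℝ (Fin d) × ℝ) →ₗ[ℝ] _) -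
      LinearMap.proj (base e.1.1)) ∘ₗ LinearMap.proj e.1.1
  refine ae_linearIndependent volume φ (q := q) ?_
  have hq : (fun e => φ e q) = Module.finBasis ℝ W ∘ emb := by
    funext e
    have h1 : q e.1.1 e.1.2 = sec (Module.finBasis ℝ W (emb e)) := dif_pos e.2
    have h2 : q e.1.1 (base e.1.1) = 0 := dif_neg fun h => hS _ h rfl
    simp [φ, h1, h2, hsec]
  rw [hq]
  exact (Module.finBasis ℝ W).linearIndependent.comp _ emb.injective

end Generic

section Generic

theorem isTransverse_of_linearIndependent {d n : ℕ} {r : Fin n → ℕ}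
    {p : Π j : Fin n, Fin (r j) → EuclideanSpace ℝ (Fin d) × ℝ}
    (hgrad : ∀ (base : ∀ j, Fin (r j)) (S : Finset (Σ j, Fin (r j))),
      (∀ e ∈ S, e.2 ≠ base e.1) → S.card ≤ d →
      LinearIndependent ℝ fun e : S => (p e.1.1 e.1.2 - p e.1.1 (base e.1.1)).1)
    (haff : ∀ (base : ∀ j, Fin (r j)) (S : Finset (Σ j, Fin (r j))),
      (∀ e ∈ S, e.2 ≠ base e.1) → S.card ≤ d + 1 →
      LinearIndependent ℝ fun e : S => p e.1.1 e.1.2 - p e.1.1 (base e.1.1)) :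
    IsTransverse (fun j i => (p j i).1) fun j i => (p j i).2 := by
  classical
  intro x hx c
  choose base hbase using fun j => (hx j).nonempty
  let S : Finset (Σ j, Fin (r j)) := Finset.univ.filter fun e =>
    e.2 ∈ activeSet (fun j i => (p j i).1) (fun j i => (p j i).2) x e.1 ∧ e.2 ≠ base e.1
  have hS : ∀ e ∈ S, e.2 ≠ base e.1 := fun e he => (Finset.mem_filter.1 he).2.2
  have hcard : S.card ≤ d := by
    by_contra! hlt
    obtain ⟨S', hS', hcard'⟩ := Finset.exists_subset_card_eq (n := d + 1) hlt
    have hli := haff base S' (fun e he => hS e (hS' he)) hcard'.le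
    have hspan := hli.span_eq_top_of_card_eq_finrank' (by simp [hcard'])
    let ψ : EuclideanSpace ℝ (Fin d) × ℝ →ₗ[ℝ] ℝ :=
      (innerSL ℝ x).toLinearMap.coprod LinearMap.id
    have hψ : ψ = 0 := by
      refine LinearMap.ext_on_range hspan fun e => ?_
      have he := (Finset.mem_filter.1 (hS' e.2)).2.1
      have h := eq_of_mem_activeSet he (hbase e.1.1)
      simp only [real_inner_comm x] at h
      simp only [ψ, map_sub, LinearMap.coprod_apply, LinearMap.zero_apply, LinearMap.id_apply,
        ContinuousLinearMap.coe_coe, innerSL_apply_apply]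
      linarith
    have h1 : ψ (0, 1) = 1 := by simp [ψ]
    rw [hψ] at h1
    simp at h1
  obtain ⟨A, hA⟩ := (hgrad base S hS hcard).exists_linearMap_apply_eq_single
  let θ : EuclideanSpace ℝ (Fin d) →ₗ[ℝ] ℝ :=
    ∑ e : S, (c e.1.1 e.1.2 - c e.1.1 (base e.1.1)) • LinearMap.proj e ∘ₗ A
  have hθ : ∀ e : S, θ (p e.1.1 e.1.2 - p e.1.1 (base e.1.1)).1 =
      c e.1.1 e.1.2 - c e.1.1 (base e.1.1) := by
    intro e
    simp only [θ, LinearMap.sum_apply, LinearMap.smul_apply, LinearMap.comp_apply, hA]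
    simp [Pi.single_apply]
  let v := (InnerProductSpace.toDual ℝ _).symm θ.toContinuousLinearMap
  have hv : ∀ y, ⟪y, v⟫ = θ y := fun y => by
    rw [real_inner_comm]
    exact InnerProductSpace.toDual_symm_apply
  refine ⟨v, fun j => ⟪(p j (base j)).1, v⟫ - c j (base j), fun j i hi => ?_⟩
  by_cases hib : i = base j
  · subst hib
    ring
  · have h := hθ ⟨⟨j, i⟩, Finset.mem_filter.2 ⟨Finset.mem_univ _, hi, hib⟩⟩
    rw [← hv, Prod.fst_sub, inner_sub_left] at h
    linarith

end Generic

/-- For Lebesgue-almost-every choice of the coefficient tuples of `n` convex PL functions on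
`ℝ^d` (`2 ≤ d`, `1 ≤ n < d`, each a maximum of `r j ≥ 2` affine functions), the one-point
compactification of the complete intersection of the corresponding bend loci is
`(d - n - 1)`-connected. -/
theorem complete_intersection_onePoint_connected (d n : ℕ) (hd : 2 ≤ d) (hn : 1 ≤ n)
    (hnd : n < d) (r : Fin n → ℕ) (hr : ∀ j, 2 ≤ r j) :
    ∀ᵐ p ∂(volume : Measure (Π j : Fin n, Fin (r j) → EuclideanSpace ℝ (Fin d) × ℝ)),
      SpaceMConnected (d - n - 1)
        (OnePoint ↥(⋂ j : Fin n, bendLocus (fun i => (p j i).1) (fun i => (p j i).2))) := by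
  have hgrad : ∀ᵐ p ∂(volume : Measure (Π j : Fin n, Fin (r j) → EuclideanSpace ℝ (Fin d) × ℝ)),
      ∀ (base : ∀ j, Fin (r j)) (S : Finset (Σ j, Fin (r j))), (∀ e ∈ S, e.2 ≠ base e.1) →
      S.card ≤ d → LinearIndependent ℝ fun e : S => (p e.1.1 e.1.2 - p e.1.1 (base e.1.1)).1 := by
    simp only [ae_all_iff]
    intro base S hS hcard
    exact ae_linearIndependent_differences (LinearMap.fst ℝ _ _) Prod.fst_surjective base S hS
      (by simpa using hcard)
  have haff : ∀ᵐ p ∂(volume : Measure (Π j : Fin n, Fin (r j) → EuclideanSpace ℝ (Fin d) × ℝ)),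
      ∀ (base : ∀ j, Fin (r j)) (S : Finset (Σ j, Fin (r j))), (∀ e ∈ S, e.2 ≠ base e.1) →
      S.card ≤ d + 1 → LinearIndependent ℝ fun e : S => p e.1.1 e.1.2 - p e.1.1 (base e.1.1) := by
    simp only [ae_all_iff]
    intro base S hS hcard
    exact ae_linearIndependent_differences LinearMap.id Function.surjective_id base S hS
      (by simpa using hcard)
  filter_upwards [hgrad, haff] with p hp hp'
  have hinj : ∀ j, Function.Injective fun i => (p j i).1 := by
    intro j i i' h
    by_contra hne
    let base : ∀ j, Fin (r j) := Function.update (fun j => ⟨0, by have := hr j; omega⟩) j i'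
    have hli := hp base {⟨j, i⟩} (by simpa [base] using hne) (by simp; omega)
    have h0 := hli.ne_zero ⟨⟨j, i⟩, by simp⟩
    apply h0
    simpa [base, sub_eq_zero] using h
  rw [iInter_bendLocus hr hinj]
  exact (isTransverse_of_linearIndependent hp hp').spaceMConnected (by simp; omega)
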